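/- arXiv:1901.10789 — 9 statements merged into one kernel-verified Lean document; each statement's English description precedes it below -/
import Mathlib

section
/- There exist universal constants C, c₁, c₂ > 0 and an integer n₀ such that for every n ≥ n₀ and every integer T with ln n ≤ T ≤ n/C, there exists a matrix A ∈ {−1,+1}^{n×n} with the following two properties: (1) letting v ∈ ℝⁿ be the vector with all coordinates equal to 1/n, every coordinate of Av is at least −c₁/√n; (2) for every vector w ∈ ℝⁿ with ‖w‖₀ ≤ T and ‖w‖₁ = 1, it holds that min_{1≤i≤n} (Aw)_i ≤ −c₂·√(ln(n/T)/T). -/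
open Finset
open scoped Classical

/-- The sign `±1` encoded by a Boolean. -/
noncomputable def boolSign (b : Bool) : ℝ := if b then 1 else -1

/-- The signed sum `∑ j, ± w j` with signs encoded by `a`. -/
noncomputable def signedSum {ι : Type*} [Fintype ι] (a : ι → Bool) (w : ι → ℝ) : ℝ :=
  ∑ j, boolSign (a j) * w j

theorem signedSum_smul {ι : Type*} [Fintype ι] (a : ι → Bool) (c : ℝ) (w : ι → ℝ) :
    signedSum a (fun j => c * w j) = c * signedSum a w := by
  simp only [signedSum, Finset.mul_sum]
  exact Finset.sum_congr rfl fun j _ => by ring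

section Tail

variable {ι : Type*} [Fintype ι] [DecidableEq ι]

theorem sum_exp_signedSum (u : ι → ℝ) :
    ∑ a : ι → Bool, Real.exp (signedSum a u) =
      2 ^ Fintype.card ι * ∏ j, Real.cosh (u j) := by
  have h := Finset.prod_univ_sum (fun _ : ι => (Finset.univ : Finset Bool))
    (fun j b => Real.exp (boolSign b * u j))
  rw [Fintype.piFinset_univ] at h
  simp only [signedSum, Real.exp_sum]
  rw [← h, ← Finset.card_univ, ← Finset.prod_const, ← Finset.prod_mul_distrib]
  refine Finset.prod_congr rfl fun j _ => ?_
  rw [Real.cosh_eq]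
  simp [boolSign]
  ring

theorem exp_mul_sub_sq_le_cosh {α : ℝ} (h0 : 0 ≤ α) (h1 : α ≤ 1) (x : ℝ) :
    Real.exp (α * x - α ^ 2) ≤ Real.cosh x := by
  have hc := convexOn_exp.2 (Set.mem_univ (x - α)) (Set.mem_univ (-x + α))
    (by linarith : 0 ≤ (1 + α) / 2) (by linarith : 0 ≤ (1 - α) / 2) (by ring)
  simp only [smul_eq_mul] at hc
  have e1 : (1 + α) / 2 * (x - α) + (1 - α) / 2 * (-x + α) = α * x - α ^ 2 := by ring
  rw [e1, sub_eq_add_neg x, Real.exp_add, Real.exp_add] at hc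
  have e2 : (1 + α) * Real.exp (-α) ≤ 1 := by
    have := Real.add_one_le_exp α
    calc (1 + α) * Real.exp (-α) ≤ Real.exp α * Real.exp (-α) := by gcongr; linarith
      _ = 1 := by rw [← Real.exp_add]; simp
  have e3 : (1 - α) * Real.exp α ≤ 1 := by
    have := Real.add_one_le_exp (-α)
    calc (1 - α) * Real.exp α ≤ Real.exp (-α) * Real.exp α := by gcongr; linarith
      _ = 1 := by rw [← Real.exp_add]; simp
  rw [Real.cosh_eq]
  nlinarith [Real.exp_pos x, Real.exp_pos (-x)]

theorem cosh_two_mul_le_cosh_pow_four (x : ℝ) : Real.cosh (2 * x) ≤ Real.cosh x ^ 4 := by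
  rw [Real.cosh_two_mul, Real.sinh_sq]
  nlinarith [sq_nonneg (Real.cosh x ^ 2 - 1)]

/-- Hoeffding's inequality for Rademacher sums, in counting form. -/
theorem card_signedSum_lt_le (u : ι → ℝ) {V r : ℝ} (hV : 0 < V) (hr : 0 ≤ r)
    (hu : ∑ j, u j ^ 2 ≤ V) :
    ((Finset.univ.filter fun a : ι → Bool => signedSum a u < -r).card : ℝ) ≤
      2 ^ Fintype.card ι * Real.exp (-(r ^ 2 / (2 * V))) := by
  set G := Finset.univ.filter fun a : ι → Bool => signedSum a u < -r
  have h1 : (G.card : ℝ) * Real.exp (r / V * r) ≤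
      2 ^ Fintype.card ι * Real.exp ((r / V) ^ 2 * V / 2) := by
    calc (G.card : ℝ) * Real.exp (r / V * r) = ∑ a ∈ G, Real.exp (r / V * r) := by simp
      _ ≤ ∑ a ∈ G, Real.exp (signedSum a fun j => -(r / V) * u j) := by
          refine Finset.sum_le_sum fun a ha => Real.exp_le_exp.2 ?_
          rw [signedSum_smul]
          have : signedSum a u < -r := (Finset.mem_filter.1 ha).2
          have h2 : 0 ≤ r / V := by positivity
          nlinarith
      _ ≤ ∑ a, Real.exp (signedSum a fun j => -(r / V) * u j) :=
          Finset.sum_le_sum_of_subset_of_nonneg (Finset.subset_univ _)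
            fun _ _ _ => (Real.exp_pos _).le
      _ ≤ _ := by
          rw [sum_exp_signedSum]
          gcongr
          calc ∏ j, Real.cosh (-(r / V) * u j)
              ≤ ∏ j, Real.exp ((-(r / V) * u j) ^ 2 / 2) :=
                Finset.prod_le_prod (fun _ _ => (Real.cosh_pos _).le)
                  fun _ _ => Real.cosh_le_exp_half_sq _
            _ = Real.exp ((r / V) ^ 2 * (∑ j, u j ^ 2) / 2) := by
                rw [← Real.exp_sum, Finset.mul_sum, Finset.sum_div]
                congr 1
                exact Finset.sum_congr rfl fun j _ => by ring
            _ ≤ _ := by gcongr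
  have h3 : -(r ^ 2 / (2 * V)) = (r / V) ^ 2 * V / 2 - r / V * r := by
    field_simp; ring
  rw [h3, Real.exp_sub, ← mul_div_assoc, le_div_iff₀ (Real.exp_pos _)]
  exact h1

/-- A lower bound for the lower tail of a Rademacher sum with sparse coefficients, by tilting
and the Paley–Zygmund inequality. -/
theorem card_signedSum_le_ge (w : ι → ℝ) {T L : ℝ} (hw : ∑ j, |w j| = 1)
    (hT : ((Finset.univ.filter fun j => w j ≠ 0).card : ℝ) ≤ T)
    (hL : 2 * Real.log 2 ≤ L) (hLT : L ≤ T) :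
    2 ^ Fintype.card ι * (Real.exp (-(2 * L)) / 4) ≤
      ((Finset.univ.filter fun a : ι → Bool => signedSum a w ≤ -(√(L / T) / 4)).card : ℝ) := by
  have hL0 : 0 < L := by have := Real.log_pos one_lt_two; linarith
  have hT0 : 0 < T := hL0.trans_le hLT
  set α := √(L / T) with hα
  have hα0 : 0 < α := Real.sqrt_pos.2 (by positivity)
  have hα2 : α ^ 2 = L / T := Real.sq_sqrt (by positivity)
  have hα1 : α ≤ 1 := by
    rw [hα, Real.sqrt_le_one]; exact (div_le_one hT0).2 hLT
  -- the cumulant generating function reaches the level `L`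
  obtain ⟨l, ⟨hl0, hl1⟩, hl⟩ : ∃ l ∈ Set.Icc 0 (2 * L / α),
      ∑ j, Real.log (Real.cosh (l * w j)) = L := by
    have hcont : Continuous fun l : ℝ => ∑ j, Real.log (Real.cosh (l * w j)) := by
      refine continuous_finsetSum _ fun j _ => Continuous.log ?_ fun l => (Real.cosh_pos _).ne'
      exact Real.continuous_cosh.comp (by fun_prop)
    refine intermediate_value_Icc (by positivity) hcont.continuousOn ⟨by simp [hL0.le], ?_⟩
    have hpt : ∀ j, α * (2 * L / α) * |w j| - (if w j ≠ 0 then α ^ 2 else 0) ≤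
        Real.log (Real.cosh (2 * L / α * w j)) := by
      intro j
      by_cases hj : w j = 0
      · simp [hj]
      · rw [if_pos hj, Real.le_log_iff_exp_le (Real.cosh_pos _), ← Real.cosh_abs, abs_mul,
          abs_of_pos (by positivity : 0 < 2 * L / α), mul_assoc]
        exact exp_mul_sub_sq_le_cosh hα0.le hα1 _
    refine le_trans ?_ (Finset.sum_le_sum fun j _ => hpt j)
    rw [Finset.sum_sub_distrib, ← Finset.mul_sum, hw, ← Finset.sum_filter, Finset.sum_const,
      nsmul_eq_mul, hα2]
    have h1 : ((Finset.univ.filter fun j => w j ≠ 0).card : ℝ) * (L / T) ≤ T * (L / T) := by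
      gcongr
    have h2 : T * (L / T) = L := by field_simp
    have h3 : α * (2 * L / α) = 2 * L := by field_simp
    linarith
  have hlpos : 0 < l := by
    rcases hl0.eq_or_lt with h | h
    · subst h; simp at hl; linarith
    · exact h
  have hprod : ∏ j, Real.cosh (l * w j) = Real.exp L := by
    rw [← hl, Real.exp_sum]
    exact Finset.prod_congr rfl fun j _ => (Real.exp_log (Real.cosh_pos _)).symm
  set K : ℝ := 2 ^ Fintype.card ι with hK
  have hK0 : 0 < K := by positivity
  set Z : (ι → Bool) → ℝ := fun a => Real.exp (-l * signedSum a w) with hZ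
  have hZ1 : ∑ a, Z a = K * Real.exp L := by
    simp only [hZ, ← signedSum_smul, sum_exp_signedSum]
    rw [← hprod]
    simp [neg_mul, hK]
  have hZ2 : ∑ a, Z a ^ 2 ≤ K * Real.exp L ^ 4 := by
    have : ∀ a, Z a ^ 2 = Real.exp (signedSum a fun j => -(2 * l) * w j) := by
      intro a
      simp only [hZ, signedSum_smul]
      rw [sq, ← Real.exp_add]
      congr 1; ring
    simp only [this, sum_exp_signedSum]
    rw [← hprod, ← Finset.prod_pow]
    gcongr with j
    rw [neg_mul, Real.cosh_neg, mul_assoc]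
    exact cosh_two_mul_le_cosh_pow_four _
  set G := Finset.univ.filter fun a => Real.exp L / 2 ≤ Z a with hG
  have hGsum : K * Real.exp L / 2 ≤ ∑ a ∈ G, Z a := by
    have h1 := Finset.sum_filter_add_sum_filter_not Finset.univ
      (fun a => Real.exp L / 2 ≤ Z a) Z
    have h2 : ∑ a with ¬ (Real.exp L / 2 ≤ Z a), Z a ≤ K * (Real.exp L / 2) := by
      calc ∑ a with ¬ (Real.exp L / 2 ≤ Z a), Z a
          ≤ ∑ a with ¬ (Real.exp L / 2 ≤ Z a), Real.exp L / 2 :=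
            Finset.sum_le_sum fun a ha => (not_le.1 (Finset.mem_filter.1 ha).2).le
        _ ≤ ∑ a : ι → Bool, Real.exp L / 2 :=
            Finset.sum_le_sum_of_subset_of_nonneg (Finset.subset_univ _)
              fun _ _ _ => by positivity
        _ = _ := by simp [hK]
    rw [hZ1] at h1
    linarith
  have hCS : (∑ a ∈ G, Z a) ^ 2 ≤ (G.card : ℝ) * (K * Real.exp L ^ 4) := by
    refine sq_sum_le_card_mul_sum_sq.trans ?_
    gcongr
    exact (Finset.sum_le_sum_of_subset_of_nonneg (Finset.subset_univ _)
              fun _ _ _ => by positivity).trans hZ2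
  have hGcard : K * (Real.exp (-(2 * L)) / 4) ≤ (G.card : ℝ) := by
    have h1 : (K * Real.exp L / 2) ^ 2 ≤ (G.card : ℝ) * (K * Real.exp L ^ 4) :=
      le_trans (by gcongr) hCS
    have h2 : Real.exp (-(2 * L)) = (Real.exp L ^ 2)⁻¹ := by
      rw [Real.exp_neg, ← Real.exp_nat_mul]; norm_num
    rw [h2]
    have hE := Real.exp_pos L
    have h3 : K * ((Real.exp L ^ 2)⁻¹ / 4) =
        (K * Real.exp L / 2) ^ 2 / (K * Real.exp L ^ 4) := by field_simp; ring
    rw [h3, div_le_iff₀ (by positivity)]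
    exact h1
  refine hGcard.trans ?_
  gcongr
  intro a ha
  have h1 : Real.exp L / 2 ≤ Real.exp (-l * signedSum a w) := (Finset.mem_filter.1 ha).2
  rw [Finset.mem_filter]
  refine ⟨Finset.mem_univ _, ?_⟩
  have h2 : L - Real.log 2 ≤ -l * signedSum a w := by
    rw [← Real.exp_le_exp, Real.exp_sub, Real.exp_log two_pos]; exact h1
  have h3 : l * α ≤ 2 * L := (le_div_iff₀ hα0).1 hl1
  have h4 : l * (α / 4) ≤ l * (-signedSum a w) := by linarith
  linarith [le_of_mul_le_mul_left h4 hlpos]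

end Tail

section Flip

variable {ι : Type*} [Fintype ι] [DecidableEq ι]

/-- Flipping the signs off the support of `w` leaves `signedSum · w` unchanged, so at least half
of the sign vectors under consideration have a total sum that is not too negative. -/
theorem card_le_two_mul_card_add_card (w : ι → ℝ) (τ r : ℝ) :
    (Finset.univ.filter fun a : ι → Bool => signedSum a w ≤ τ).card ≤
      2 * (Finset.univ.filter fun a : ι → Bool =>
        -r ≤ signedSum a (fun _ => 1) ∧ signedSum a w ≤ τ).card +
      (Finset.univ.filter fun a : ι → Bool =>
        signedSum a ((Function.support w).indicator 1) < -r).card := by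
  set E := Finset.univ.filter fun a : ι → Bool =>
        -r ≤ signedSum a (fun _ => 1) ∧ signedSum a w ≤ τ with hE
  set flip : (ι → Bool) → ι → Bool := fun a j => if w j ≠ 0 then a j else !a j with hflip
  have hinv : Function.Involutive flip := by
    intro a
    funext j
    by_cases hj : w j = 0 <;> simp [hflip, hj]
  have hw : ∀ a, signedSum (flip a) w = signedSum a w := by
    intro a
    refine Finset.sum_congr rfl fun j _ => ?_
    by_cases hj : w j = 0 <;> simp [hflip, hj]
  have hone : ∀ a, signedSum a (fun _ => 1) + signedSum (flip a) (fun _ => 1) =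
      2 * signedSum a ((Function.support w).indicator 1) := by
    intro a
    simp only [signedSum, ← Finset.sum_add_distrib, Finset.mul_sum]
    refine Finset.sum_congr rfl fun j _ => ?_
    by_cases hj : w j = 0
    · cases h : a j <;> simp [hflip, hj, h, boolSign]
    · simp [hflip, hj]; ring
  have hsub : (Finset.univ.filter fun a : ι → Bool => signedSum a w ≤ τ) ⊆
      (E ∪ E.image flip) ∪ (Finset.univ.filter fun a : ι → Bool =>
        signedSum a ((Function.support w).indicator 1) < -r) := by
    intro a ha
    have ha : signedSum a w ≤ τ := (Finset.mem_filter.1 ha).2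
    by_cases h1 : signedSum a ((Function.support w).indicator 1) < -r
    · exact Finset.mem_union_right _ (Finset.mem_filter.2 ⟨Finset.mem_univ _, h1⟩)
    refine Finset.mem_union_left _ ?_
    by_cases h2 : -r ≤ signedSum a (fun _ => 1)
    · exact Finset.mem_union_left _ (Finset.mem_filter.2 ⟨Finset.mem_univ _, h2, ha⟩)
    · refine Finset.mem_union_right _ (Finset.mem_image.2 ⟨flip a, ?_, hinv a⟩)
      refine Finset.mem_filter.2 ⟨Finset.mem_univ _, ?_, (hw a).trans_le ha⟩
      linarith [hone a]
  have h1 := Finset.card_le_card hsub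
  have h2 := Finset.card_union_le (E ∪ E.image flip) (Finset.univ.filter fun a : ι → Bool =>
        signedSum a ((Function.support w).indicator 1) < -r)
  have h3 := Finset.card_union_le E (E.image flip)
  have h4 : (E.image flip).card ≤ E.card := Finset.card_image_le
  omega

end Flip

section Compression

theorem sign_mul_self_eq_abs (x : ℝ) : Real.sign x * x = |x| := by
  rcases lt_trichotomy x 0 with h | rfl | h
  · rw [Real.sign_of_neg h, abs_of_neg h]; ring
  · simp
  · rw [Real.sign_of_pos h, abs_of_pos h, one_mul]

variable {κ ι : Type*} [Fintype ι]

/-- Among finitely many linear functionals on `ℝ^σ`, at most `card σ` already determine the common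
kernel. -/
theorem exists_subset_common_kernel [Fintype κ] {σ : Type*} [Fintype σ] (v : κ → σ → ℝ) (s : Set κ) :
    ∃ I : Finset κ, ↑I ⊆ s ∧ I.card ≤ Fintype.card σ ∧
      ∀ d : σ → ℝ, (∀ i ∈ I, v i ⬝ᵥ d = 0) → ∀ i ∈ s, v i ⬝ᵥ d = 0 := by
  obtain ⟨ι', a, ha, hspan, hli⟩ := exists_linearIndependent' ℝ (fun i : s => v i)
  have : Finite ι' := Finite.of_injective a ha
  have := Fintype.ofFinite ι'
  refine ⟨Finset.univ.image fun k => (a k : κ), ?_, ?_, fun d hd i hi => ?_⟩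
  · intro i hi
    obtain ⟨k, -, rfl⟩ := Finset.mem_image.1 (Finset.mem_coe.1 hi)
    exact (a k).2
  · refine Finset.card_image_le.trans ?_
    simpa using hli.fintype_card_le_finrank
  · have hmem : v i ∈ Submodule.span ℝ (Set.range ((fun i : s => v i) ∘ a)) := by
      rw [hspan]
      exact Submodule.subset_span ⟨⟨i, hi⟩, rfl⟩
    generalize v i = x at hmem
    induction hmem using Submodule.span_induction with
    | mem x hx =>
      obtain ⟨k, rfl⟩ := hx
      exact hd _ (Finset.mem_image_of_mem _ (Finset.mem_univ k))
    | zero => simp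
    | add x y _ _ hx hy => rw [add_dotProduct, hx, hy, add_zero]
    | smul c x _ hx => rw [smul_dotProduct, hx, smul_zero]

/-- Vectors of `ℓ₁` norm one with a prescribed sign pattern `σ` on which every row of `a` is at
least `-t`. -/
def signedPolytope (a : κ → ι → ℝ) (t : ℝ) (σ : ι → ℝ) : Set (ι → ℝ) :=
  {u | (∀ j, 0 ≤ σ j * u j) ∧ (∀ j, σ j = 0 → u j = 0) ∧ ∑ j, σ j * u j = 1 ∧
    ∀ i, -t ≤ a i ⬝ᵥ u}

theorem abs_eq_sign_mul_of_mem {a : κ → ι → ℝ} {t : ℝ} {w u : ι → ℝ}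
    (hu : u ∈ signedPolytope a t (fun j => Real.sign (w j))) (j : ι) :
    |u j| = Real.sign (w j) * u j := by
  have h1 := hu.1 j
  have h2 := hu.2.1 j
  dsimp only at h1 h2
  rcases lt_trichotomy (w j) 0 with h | h | h
  · rw [Real.sign_of_neg h] at h1 ⊢
    rw [abs_of_nonpos (by linarith)]; ring
  · rw [h, Real.sign_zero] at h2
    simp [h2 rfl]
  · rw [Real.sign_of_pos h] at h1 ⊢
    rw [abs_of_nonneg (by linarith)]; ring

theorem isCompact_signedPolytope (a : κ → ι → ℝ) (t : ℝ) (w : ι → ℝ) :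
    IsCompact (signedPolytope a t (fun j => Real.sign (w j))) := by
  have hclosed : IsClosed (signedPolytope a t (fun j => Real.sign (w j))) := by
    have heq : signedPolytope a t (fun j => Real.sign (w j)) =
        (⋂ j, {u | 0 ≤ Real.sign (w j) * u j}) ∩
          ((⋂ j, ⋂ _ : Real.sign (w j) = 0, {u | u j = 0}) ∩
            ({u | ∑ j, Real.sign (w j) * u j = 1} ∩ ⋂ i, {u | -t ≤ a i ⬝ᵥ u})) := by
      ext u
      simp only [signedPolytope, Set.mem_inter_iff, Set.mem_iInter, Set.mem_ofPred_eq]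
    rw [heq]
    refine IsClosed.inter ?_ (IsClosed.inter ?_ (IsClosed.inter ?_ ?_))
    · exact isClosed_iInter fun j => isClosed_le continuous_const (by fun_prop)
    · exact isClosed_iInter fun j => isClosed_iInter fun _ =>
        isClosed_eq (by fun_prop) continuous_const
    · exact isClosed_eq (by fun_prop) continuous_const
    · exact isClosed_iInter fun i => isClosed_le continuous_const (by
        unfold dotProduct; fun_prop)
  refine (isCompact_closedBall (0 : ι → ℝ) 1).of_isClosed_subset hclosed fun u hu => ?_
  rw [mem_closedBall_zero_iff, pi_norm_le_iff_of_nonneg zero_le_one]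
  intro j
  rw [Real.norm_eq_abs, ← hu.2.2.1, abs_eq_sign_mul_of_mem hu]
  exact Finset.single_le_sum (f := fun j => Real.sign (w j) * u j) (fun j _ => hu.1 j)
    (Finset.mem_univ j)

/-- At an extreme point no nonzero direction respects all tight constraints. -/
theorem eq_zero_of_mem_extremePoints [Fintype κ] {a : κ → ι → ℝ} {t : ℝ} {σ u d : ι → ℝ}
    (hu : u ∈ (signedPolytope a t σ).extremePoints ℝ) (hsupp : ∀ j, u j = 0 → d j = 0)
    (hsum : ∑ j, σ j * d j = 0) (htight : ∀ i, a i ⬝ᵥ u = -t → a i ⬝ᵥ d = 0) : d = 0 := by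
  have hmem := hu.1
  have key : ∀ e : ι → ℝ, (∀ j, u j = 0 → e j = 0) → ∑ j, σ j * e j = 0 →
      (∀ i, a i ⬝ᵥ u = -t → a i ⬝ᵥ e = 0) →
      ∀ᶠ ε : ℝ in nhdsWithin 0 (Set.Ioi 0), u + ε • e ∈ signedPolytope a t σ := by
    intro e he1 he2 he3
    have hA : ∀ j, ∀ᶠ ε : ℝ in nhdsWithin 0 (Set.Ioi 0), 0 ≤ σ j * (u j + ε * e j) := by
      intro j
      rcases (hmem.1 j).eq_or_lt with h | h
      · have : σ j = 0 ∨ u j = 0 := mul_eq_zero.1 h.symm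
        rcases this with h | h
        · simp [h]
        · simp [h, he1 j h]
      · refine nhdsWithin_le_nhds ?_
        have hc : Continuous fun ε : ℝ => σ j * (u j + ε * e j) := by fun_prop
        filter_upwards [hc.continuousAt.eventually_const_lt
          (show 0 < σ j * (u j + 0 * e j) by simpa using h)] with ε hε using hε.le
    have hB : ∀ i, ∀ᶠ ε : ℝ in nhdsWithin 0 (Set.Ioi 0), -t ≤ a i ⬝ᵥ u + ε * (a i ⬝ᵥ e) := by
      intro i
      rcases (hmem.2.2.2 i).eq_or_lt with h | h
      · simp [he3 i h.symm, h]
      · refine nhdsWithin_le_nhds ?_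
        have hc : Continuous fun ε : ℝ => a i ⬝ᵥ u + ε * (a i ⬝ᵥ e) := by fun_prop
        filter_upwards [hc.continuousAt.eventually_const_lt
          (show -t < a i ⬝ᵥ u + 0 * (a i ⬝ᵥ e) by simpa using h)] with ε hε using hε.le
    filter_upwards [Filter.eventually_all.2 hA, Filter.eventually_all.2 hB] with ε h1 h2
    refine ⟨fun j => by simpa using h1 j, fun j hj => ?_, ?_, fun i => ?_⟩
    · simp [hmem.2.1 j hj, he1 j (hmem.2.1 j hj)]
    · have : ∀ j, σ j * (u + ε • e) j = σ j * u j + ε * (σ j * e j) := by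
        intro j; simp; ring
      simp only [this, Finset.sum_add_distrib, ← Finset.mul_sum, he2, hmem.2.2.1]
      simp
    · rw [dotProduct_add, dotProduct_smul, smul_eq_mul]
      exact h2 i
  have h1 := key d hsupp hsum htight
  have h2 := key (-d) (fun j hj => by simp [hsupp j hj]) (by simp [hsum])
    (fun i hi => by simp [htight i hi])
  obtain ⟨ε, ⟨h1, h2⟩, hε⟩ := ((h1.and h2).and self_mem_nhdsWithin).exists
  have hε : 0 < ε := hε
  have h3 := hu.2 h1 h2 ⟨1 / 2, 1 / 2, by norm_num, by norm_num, by norm_num, by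
    ext j; simp; ring⟩
  have h4 : ε • d = 0 := by simpa using h3
  exact (smul_eq_zero.1 h4).resolve_left hε.ne'

/-- If some vector of `ℓ₁` norm one satisfies all the constraints `-t ≤ a i ⬝ᵥ w`, then so does one
with no larger support that is pinned down by its sign pattern and few tight rows. -/
theorem exists_determined_by_tight_rows [Fintype κ] (a : κ → ι → ℝ) (t : ℝ) (w : ι → ℝ)
    (hw : ∑ j, |w j| = 1) (hrow : ∀ i, -t ≤ a i ⬝ᵥ w) :
    ∃ (u : ι → ℝ) (I : Finset κ), ∑ j, |u j| = 1 ∧ (∀ j, w j = 0 → u j = 0) ∧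
      (∀ i, -t ≤ a i ⬝ᵥ u) ∧ (∀ i ∈ I, a i ⬝ᵥ u = -t) ∧
      I.card ≤ (Finset.univ.filter fun j => w j ≠ 0).card ∧
      ∀ u' : ι → ℝ, ∑ j, |u' j| = 1 → (∀ j, Real.sign (u' j) = Real.sign (u j)) →
        (∀ i ∈ I, a i ⬝ᵥ u' = -t) → u' = u := by
  have hne : (signedPolytope a t (fun j => Real.sign (w j))).Nonempty := by
    refine ⟨w, fun j => ?_, fun j hj => Real.sign_eq_zero_iff.1 hj, ?_, hrow⟩
    · exact Real.sign_mul_nonneg _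
    · rw [← hw]
      exact Finset.sum_congr rfl fun j _ => sign_mul_self_eq_abs _
  obtain ⟨u, hu⟩ := (isCompact_signedPolytope a t w).extremePoints_nonempty hne
  have hmem := hu.1
  have habs := abs_eq_sign_mul_of_mem hmem
  have hzero : ∀ j, w j = 0 → u j = 0 := fun j hj => hmem.2.1 j (by simp [hj])
  obtain ⟨I, hI, hcard, hker⟩ := exists_subset_common_kernel
    (fun i (j : {j // w j ≠ 0}) => a i j) {i | a i ⬝ᵥ u = -t}
  have hdot : ∀ (i : κ) (d : ι → ℝ), (∀ j, w j = 0 → d j = 0) →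
      (fun j : {j // w j ≠ 0} => a i j) ⬝ᵥ (fun j : {j // w j ≠ 0} => d j) = a i ⬝ᵥ d := by
    intro i d hd
    simp only [dotProduct]
    rw [← Finset.sum_subtype (Finset.univ.filter fun j => w j ≠ 0) (by simp)
      (fun j => a i j * d j), Finset.sum_filter_of_ne]
    intro j _ hj h0
    exact hj (by simp [hd j h0])
  refine ⟨u, I, ?_, hzero, hmem.2.2.2, fun i hi => hI hi, ?_, fun u' h1 h2 h3 => ?_⟩
  · rw [← hmem.2.2.1]
    exact Finset.sum_congr rfl fun j _ => habs j
  · rwa [Fintype.card_subtype] at hcard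
  · have hu'0 : ∀ j, u j = 0 → u' j = 0 := by
      intro j hj
      have := h2 j
      rw [hj, Real.sign_zero, Real.sign_eq_zero_iff] at this
      exact this
    have hu'abs : ∀ j, Real.sign (w j) * u' j = |u' j| := by
      intro j
      by_cases hj : u j = 0
      · simp [hu'0 j hj]
      · have hs : Real.sign (w j) = Real.sign (u j) := by
          have h4 := habs j
          rw [← sign_mul_self_eq_abs] at h4
          exact (mul_right_cancel₀ hj h4).symm
        rw [hs, ← h2 j, sign_mul_self_eq_abs]
    have hd : u' - u = 0 := by
      refine eq_zero_of_mem_extremePoints hu (fun j hj => by simp [hj, hu'0 j hj]) ?_ ?_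
      · simp only [Pi.sub_apply, mul_sub, Finset.sum_sub_distrib, hu'abs, h1]
        rw [hmem.2.2.1, sub_self]
      · have hdz : ∀ j, w j = 0 → (u' - u) j = 0 := fun j hj => by
          simp [hzero j hj, hu'0 j (hzero j hj)]
        intro i hi
        rw [← hdot i _ hdz]
        refine hker _ (fun k hk => ?_) i hi
        rw [hdot k _ hdz, dotProduct_sub, h3 k hk, hI hk, sub_self]
    exact sub_eq_zero.1 hd

end Compression

section Counting

/-- Count the families `f` whose entries all lie in a small set `G w`, for a parameter `w` that is
determined by the entries of `f` on `I`. -/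
theorem card_determined_le {κ α W : Type*} [Fintype κ] [DecidableEq κ] (R : Finset α) (G : W → Finset α)
    (I : Finset κ) (D : (κ → α) → W → Prop) (m : ℕ)
    (huniq : ∀ f g w w', D f w → D g w' → (∀ i ∈ I, f i = g i) → w = w')
    (hG : ∀ f w, D f w → (G w).card ≤ m) :
    ((Fintype.piFinset fun _ : κ => R).filter fun f => ∃ w, D f w ∧ ∀ i, f i ∈ G w).card ≤
      m ^ (Fintype.card κ - I.card) * R.card ^ I.card := by
  have h := Finset.card_le_mul_card_image_of_maps_to
    (s := (Fintype.piFinset fun _ : κ => R).filter fun f => ∃ w, D f w ∧ ∀ i, f i ∈ G w)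
    (t := Fintype.piFinset fun _ : I => R) (f := fun f (i : I) => f i)
    (fun f hf => by
      rw [Fintype.mem_piFinset]
      exact fun i => Fintype.mem_piFinset.1 (Finset.mem_filter.1 hf).1 i)
    (m ^ (Fintype.card κ - I.card)) ?_
  · simpa using h
  intro b _
  rcases Finset.eq_empty_or_nonempty (((Fintype.piFinset fun _ : κ => R).filter fun f =>
    ∃ w, D f w ∧ ∀ i, f i ∈ G w).filter fun f => (fun i : I => f i) = b) with h0 | ⟨f₀, hf₀⟩
  · rw [h0]; simp
  obtain ⟨hf₀, hb₀⟩ := Finset.mem_filter.1 hf₀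
  obtain ⟨-, w₀, hD₀, -⟩ := Finset.mem_filter.1 hf₀
  have hcard : (Fintype.piFinset fun _ : {i // i ∉ I} => G w₀).card ≤
      m ^ (Fintype.card κ - I.card) := by
    have hc : Fintype.card {i // i ∉ I} = Fintype.card κ - I.card := by
      rw [Fintype.card_subtype_compl]; simp
    rw [Fintype.card_piFinset, Finset.prod_const, Finset.card_univ, hc]
    exact Nat.pow_le_pow_left (hG _ _ hD₀) _
  refine (Finset.card_le_card_of_injOn (fun f (i : {i // i ∉ I}) => f i) ?_ ?_).trans hcard
  · intro f hf
    obtain ⟨hf, hb⟩ := Finset.mem_filter.1 (Finset.mem_coe.1 hf)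
    obtain ⟨-, w, hD, hmem⟩ := Finset.mem_filter.1 hf
    have hw : w = w₀ := huniq _ _ _ _ hD hD₀ fun i hi =>
      (congrFun hb ⟨i, hi⟩).trans (congrFun hb₀ ⟨i, hi⟩).symm
    subst hw
    exact Finset.mem_coe.2 (Fintype.mem_piFinset.2 fun i => hmem i)
  · intro f hf g hg hfg
    have hbf := (Finset.mem_filter.1 (Finset.mem_coe.1 hf)).2
    have hbg := (Finset.mem_filter.1 (Finset.mem_coe.1 hg)).2
    funext i
    by_cases hi : i ∈ I
    · exact (congrFun hbf ⟨i, hi⟩).trans (congrFun hbg ⟨i, hi⟩).symm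
    · exact congrFun hfg ⟨i, hi⟩

theorem card_filter_card_le_le (n T : ℕ) (hT : 0 < T) (hTn : T ≤ n) :
    ((Finset.univ.filter fun s : Finset (Fin n) => s.card ≤ T).card : ℝ) ≤
      Real.exp (T * (1 + Real.log (n / T))) := by
  have hT0 : (0 : ℝ) < T := by exact_mod_cast hT
  have hn0 : (0 : ℝ) < n := by exact_mod_cast hT.trans_le hTn
  set q : ℝ := T / n with hq
  have hq0 : 0 < q := by positivity
  have hq1 : q ≤ 1 := (div_le_one hn0).2 (by exact_mod_cast hTn)
  have h1 : ((Finset.univ.filter fun s : Finset (Fin n) => s.card ≤ T).card : ℝ) * q ^ T ≤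
      Real.exp T := by
    calc ((Finset.univ.filter fun s : Finset (Fin n) => s.card ≤ T).card : ℝ) * q ^ T
        = ∑ s with Finset.card (α := Fin n) s ≤ T, q ^ T := by simp
      _ ≤ ∑ s with Finset.card (α := Fin n) s ≤ T, q ^ s.card :=
          Finset.sum_le_sum fun s hs =>
            pow_le_pow_of_le_one hq0.le hq1 (Finset.mem_filter.1 hs).2
      _ ≤ ∑ s : Finset (Fin n), q ^ s.card :=
          Finset.sum_le_sum_of_subset_of_nonneg (Finset.subset_univ _)
            fun _ _ _ => by positivity
      _ = (q + 1) ^ n := by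
          have := Fintype.sum_pow_mul_eq_add_pow (Fin n) q 1
          simpa using this
      _ ≤ Real.exp q ^ n := by
          gcongr
          exact Real.add_one_le_exp q
      _ = Real.exp T := by
          rw [← Real.exp_nat_mul, hq]
          congr 1
          field_simp
  have h2 : Real.exp (T * (1 + Real.log (n / T))) = Real.exp T / q ^ T := by
    rw [mul_add, mul_one, Real.exp_add, Real.exp_nat_mul, Real.exp_log (by positivity), hq,
      div_eq_mul_inv (Real.exp _), ← inv_pow, inv_div]
  rw [h2, le_div_iff₀ (by positivity)]
  exact h1

end Counting

section Selection

/-- The union bound over the sign patterns and tight rows of an extremal vector. -/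
theorem exists_rows_of_card_ge {n T : ℕ} (hT : 0 < T) (hTn : T ≤ n) (R : Finset (Fin n → Bool))
    (hR : R.Nonempty) {t p : ℝ} (hp1 : p ≤ 1) (hp0 : 0 ≤ p)
    (hp : ∀ w : Fin n → ℝ, ∑ j, |w j| = 1 → (Finset.univ.filter fun j => w j ≠ 0).card ≤ T →
      p * R.card ≤ ((R.filter fun a => signedSum a w < -t).card : ℝ))
    (hbig : 3 * (T * (1 + Real.log (n / T))) < p * (n - T)) :
    ∃ f : Fin n → Fin n → Bool, (∀ i, f i ∈ R) ∧
      ∀ w : Fin n → ℝ, ∑ j, |w j| = 1 → (Finset.univ.filter fun j => w j ≠ 0).card ≤ T →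
        ∃ i, signedSum (f i) w < -t := by
  by_contra! hcon
  set G : (Fin n → ℝ) → Finset (Fin n → Bool) := fun w => R.filter fun a => -t ≤ signedSum a w
    with hG
  set m : ℕ := ⌊(1 - p) * R.card⌋₊ with hm
  have hR0 : (0 : ℝ) < R.card := by exact_mod_cast hR.card_pos
  have hGcard : ∀ w : Fin n → ℝ, ∑ j, |w j| = 1 →
      (Finset.univ.filter fun j => w j ≠ 0).card ≤ T → (G w).card ≤ m := by
    intro w h1 h2
    refine Nat.le_floor ?_
    have h3 : (R.filter fun a => signedSum a w < -t).card + (G w).card = R.card := by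
      have hsdiff : G w = R \ R.filter fun a => signedSum a w < -t := by
        ext a
        simp only [hG, Finset.mem_filter, Finset.mem_sdiff, ← not_lt]
        tauto
      rw [hsdiff, add_comm]
      exact Finset.card_sdiff_add_card_eq_card (Finset.filter_subset _ _)
    have h4 : ((R.filter fun a => signedSum a w < -t).card : ℝ) + (G w).card = R.card := by
      exact_mod_cast h3
    linarith [hp w h1 h2]
  set Q := Finset.univ.filter fun s : Finset (Fin n) => s.card ≤ T with hQ
  set D : Finset (Fin n) × Finset (Fin n) × Finset (Fin n) → (Fin n → Fin n → Bool) →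
      (Fin n → ℝ) → Prop := fun x f w =>
    (∑ j, |w j| = 1 ∧ (Finset.univ.filter fun j => w j ≠ 0).card ≤ T) ∧
    (∀ j, 0 < w j ↔ j ∈ x.1) ∧ (∀ j, w j < 0 ↔ j ∈ x.2.1) ∧
    (∀ i ∈ x.2.2, signedSum (f i) w = -t) ∧
    ∀ u : Fin n → ℝ, ∑ j, |u j| = 1 → (∀ j, Real.sign (u j) = Real.sign (w j)) →
      (∀ i ∈ x.2.2, signedSum (f i) u = -t) → u = w with hD
  set B : Finset (Fin n) × Finset (Fin n) × Finset (Fin n) → Finset (Fin n → Fin n → Bool) :=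
    fun x => (Fintype.piFinset fun _ : Fin n => R).filter fun f =>
      ∃ w, D x f w ∧ ∀ i, f i ∈ G w with hB
  have hcover : (Fintype.piFinset fun _ : Fin n => R) ⊆ (Q ×ˢ Q ×ˢ Q).biUnion B := by
    intro f hf
    obtain ⟨w, hw1, hwT, hw⟩ := hcon f (Fintype.mem_piFinset.1 hf)
    obtain ⟨u, I, hu1, hu0, hrow, htight, hI, huniq⟩ :=
      exists_determined_by_tight_rows (fun i j => boolSign (f i j)) t w hw1 hw
    have hsub : ∀ s : Finset (Fin n), (∀ j ∈ s, u j ≠ 0) → s.card ≤ T := by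
      intro s hs
      refine (Finset.card_le_card fun j hj => ?_).trans hwT
      rw [Finset.mem_filter]
      exact ⟨Finset.mem_univ j, fun h => hs j hj (hu0 j h)⟩
    refine Finset.mem_biUnion.2 ⟨(Finset.univ.filter fun j => 0 < u j,
      Finset.univ.filter fun j => u j < 0, I), ?_, Finset.mem_filter.2 ⟨hf, u, ?_, ?_⟩⟩
    · simp only [Finset.mem_product, hQ, Finset.mem_filter, Finset.mem_univ, true_and]
      exact ⟨hsub _ fun j hj => (Finset.mem_filter.1 hj).2.ne',
        hsub _ fun j hj => (Finset.mem_filter.1 hj).2.ne, hI.trans hwT⟩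
    · exact ⟨⟨hu1, hsub _ fun j hj => (Finset.mem_filter.1 hj).2⟩, by simp, by simp, htight, huniq⟩
    · exact fun i => Finset.mem_filter.2 ⟨Fintype.mem_piFinset.1 hf i, hrow i⟩
  have hBcard : ∀ x ∈ Q ×ˢ Q ×ˢ Q,
      ((B x).card : ℝ) ≤ Real.exp (-(p * (n - T))) * (R.card : ℝ) ^ n := by
    intro x hx
    have hxT : x.2.2.card ≤ T := by
      simp only [Finset.mem_product, hQ, Finset.mem_filter, Finset.mem_univ, true_and] at hx
      exact hx.2.2
    have hle : (B x).card ≤ m ^ (Fintype.card (Fin n) - x.2.2.card) * R.card ^ x.2.2.card := by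
      refine card_determined_le R G x.2.2 (D x) m ?_ fun f w h => hGcard w h.1.1 h.1.2
      intro f g w w' hf hg hfg
      refine hg.2.2.2.2 w hf.1.1 (fun j => ?_) fun i hi => hfg i hi ▸ hf.2.2.2.1 i hi
      have hpos : 0 < w j ↔ 0 < w' j := (hf.2.1 j).trans (hg.2.1 j).symm
      have hneg : w j < 0 ↔ w' j < 0 := (hf.2.2.1 j).trans (hg.2.2.1 j).symm
      simp only [Real.sign, hpos, hneg]
    rw [Fintype.card_fin] at hle
    have hle' : ((B x).card : ℝ) ≤ (m : ℝ) ^ (n - x.2.2.card) * (R.card : ℝ) ^ x.2.2.card := by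
      exact_mod_cast hle
    refine hle'.trans ?_
    have hm' : (m : ℝ) ≤ Real.exp (-p) * R.card := by
      refine (Nat.floor_le (mul_nonneg (by linarith) hR0.le)).trans ?_
      gcongr
      linarith [Real.add_one_le_exp (-p)]
    calc (m : ℝ) ^ (n - x.2.2.card) * (R.card : ℝ) ^ x.2.2.card
        ≤ (Real.exp (-p) * R.card) ^ (n - x.2.2.card) * (R.card : ℝ) ^ x.2.2.card := by gcongr
      _ = Real.exp (-p) ^ (n - x.2.2.card) * (R.card : ℝ) ^ n := by
          rw [mul_pow, mul_assoc, ← pow_add, Nat.sub_add_cancel (hxT.trans hTn)]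
      _ ≤ _ := by
          gcongr
          rw [← Real.exp_nat_mul, Nat.cast_sub (hxT.trans hTn), Real.exp_le_exp]
          have : (x.2.2.card : ℝ) ≤ T := by exact_mod_cast hxT
          nlinarith
  have htotal : (R.card : ℝ) ^ n ≤
      (Q.card : ℝ) ^ 3 * (Real.exp (-(p * (n - T))) * (R.card : ℝ) ^ n) := by
    have h1 := (Finset.card_le_card hcover).trans Finset.card_biUnion_le
    rw [Fintype.card_piFinset, Finset.prod_const, Finset.card_univ, Fintype.card_fin] at h1
    have h2 : (R.card : ℝ) ^ n ≤ ∑ x ∈ Q ×ˢ Q ×ˢ Q, ((B x).card : ℝ) := by exact_mod_cast h1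
    refine h2.trans ((Finset.sum_le_sum hBcard).trans_eq ?_)
    rw [Finset.sum_const, nsmul_eq_mul, Finset.card_product, Finset.card_product]
    push_cast
    ring
  have hlt : (Q.card : ℝ) ^ 3 * Real.exp (-(p * (n - T))) < 1 := by
    calc (Q.card : ℝ) ^ 3 * Real.exp (-(p * (n - T)))
        ≤ Real.exp (T * (1 + Real.log (n / T))) ^ 3 * Real.exp (-(p * (n - T))) := by
          gcongr
          exact card_filter_card_le_le n T hT hTn
      _ = Real.exp (3 * (T * (1 + Real.log (n / T))) - p * (n - T)) := by
          rw [← Real.exp_nat_mul, ← Real.exp_add]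
          push_cast
          congr 1
      _ < 1 := by rw [Real.exp_lt_one_iff]; linarith
  have hpow : 0 < (R.card : ℝ) ^ n := by positivity
  nlinarith

/-- Every sparse vector of `ℓ₁` norm one has a very negative signed sum on a large set of sign
vectors whose total is at least `-√n`. -/
theorem card_ge_of_sparse {n T : ℕ} (hT : 0 < T) (hlog : Real.log n ≤ T)
    (hTn : (2 : ℝ) ^ 20 * T ≤ n) (w : Fin n → ℝ) (hw : ∑ j, |w j| = 1)
    (hwT : (Finset.univ.filter fun j => w j ≠ 0).card ≤ T) :
    2 ^ n * (Real.exp (-(Real.log (n / T) / 4)) / 16) ≤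
      ((Finset.univ.filter fun a : Fin n → Bool => -√n ≤ signedSum a (fun _ => 1) ∧
        signedSum a w ≤ -(√(Real.log (n / T) / 8 / T) / 4)).card : ℝ) := by
  have hT0 : (0 : ℝ) < T := by exact_mod_cast hT
  have hT1 : (1 : ℝ) ≤ T := by exact_mod_cast hT
  have hn0 : (0 : ℝ) < n := by nlinarith
  set s := Real.log (n / T) with hs
  have hx : (2 : ℝ) ^ 20 ≤ n / T := (le_div_iff₀ hT0).2 hTn
  have hs20 : 20 * Real.log 2 ≤ s := by
    have := Real.log_le_log (by positivity) hx
    rwa [Real.log_pow] at this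
  have hlog2 := Real.log_pos one_lt_two
  have hsT : s ≤ T :=
    (Real.log_le_log (by positivity) (div_le_self hn0.le hT1)).trans hlog
  have hwT' : ((Finset.univ.filter fun j => w j ≠ 0).card : ℝ) ≤ T := by exact_mod_cast hwT
  have hlower := card_signedSum_le_ge w hw hwT' (L := s / 8) (by linarith) (by linarith)
  have hupper := card_signedSum_lt_le ((Function.support w).indicator 1) (V := T)
    (r := √n) hT0 (Real.sqrt_nonneg _) (by
      simp only [Set.indicator_apply, Function.mem_support, Pi.one_apply, ite_pow, one_pow, ne_eq,
        OfNat.ofNat_ne_zero, not_false_eq_true, zero_pow]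
      rwa [← Finset.sum_filter, Finset.sum_const, nsmul_eq_mul, mul_one])
  rw [Real.sq_sqrt hn0.le, Fintype.card_fin] at hupper
  rw [Fintype.card_fin] at hlower
  have hflip := Nat.cast_le (α := ℝ).2
    (card_le_two_mul_card_add_card w (-(√(s / 8 / T) / 4)) √n)
  rw [Nat.cast_add, Nat.cast_mul, Nat.cast_ofNat] at hflip
  set y := Real.exp (s / 4) with hy
  have hy0 : 0 < y := Real.exp_pos _
  have hy4 : y ^ 4 = n / T := by
    rw [hy, ← Real.exp_nat_mul, ← Real.exp_log (by positivity : (0 : ℝ) < n / T)]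
    congr 1
    push_cast
    ring
  have hy32 : 32 ≤ y := by
    refine le_of_pow_le_pow_left₀ (n := 4) (by norm_num) hy0.le ?_
    rw [hy4]
    exact le_trans (by norm_num) hx
  have e1 : Real.exp (-(2 * (s / 8))) = y⁻¹ := by rw [hy, ← Real.exp_neg]; congr 1; ring
  have e2 : Real.exp (-(s / 4)) = y⁻¹ := by rw [hy, ← Real.exp_neg]
  have e3 : Real.exp (-((n : ℝ) / (2 * T))) ≤ y⁻¹ / 8 := by
    have h1 : (n : ℝ) / (2 * T) = y ^ 4 / 2 := by rw [hy4]; field_simp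
    rw [h1, Real.exp_neg, inv_eq_one_div y, div_div, inv_eq_one_div]
    refine one_div_le_one_div_of_le (by positivity) ?_
    have h2 := Real.add_one_le_exp (y ^ 4 / 2)
    have h3 : y * 32 ^ 3 ≤ y * y ^ 3 := by gcongr
    nlinarith
  rw [e1] at hlower
  rw [e2]
  have hK : (0 : ℝ) < 2 ^ n := by positivity
  have e4 : (2 : ℝ) ^ n * Real.exp (-((n : ℝ) / (2 * T))) ≤ 2 ^ n * (y⁻¹ / 8) := by gcongr
  linarith

end Selection

/-- Lower-bound matrix: for `ln n ≤ T ≤ n/C` there exists `A ∈ {-1,+1}^{n×n}` such that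
the uniform combination has all coordinates of `Av` at least `-c₁/√n`, while every
`T`-sparse unit-`ℓ₁` vector `w` has `min_i (Aw)_i ≤ -c₂ √(ln(n/T)/T)`. -/
theorem lower_bound_matrix :
    ∃ C c₁ c₂ : ℝ, 0 < C ∧ 0 < c₁ ∧ 0 < c₂ ∧ ∃ n₀ : ℕ,
      ∀ n : ℕ, n₀ ≤ n → ∀ T : ℕ,
        Real.log n ≤ (T : ℝ) → (T : ℝ) ≤ (n : ℝ) / C →
          ∃ A : Matrix (Fin n) (Fin n) ℝ, (∀ i j, A i j = -1 ∨ A i j = 1) ∧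
            (∀ i, -(c₁ / Real.sqrt n) ≤ A.mulVec (fun _ => 1 / (n : ℝ)) i) ∧
            (∀ w : Fin n → ℝ, (Finset.univ.filter (fun j => w j ≠ 0)).card ≤ T →
              (∑ j, |w j|) = 1 →
              (⨅ i, A.mulVec w i) ≤ -(c₂ * Real.sqrt (Real.log ((n : ℝ) / (T : ℝ)) / (T : ℝ)))) := by
  refine ⟨2 ^ 20, 1, 1 / 16, by norm_num, one_pos, by norm_num, 2, fun n hn T hlog hTn => ?_⟩
  have hn1 : (1 : ℝ) < n := by exact_mod_cast hn
  have hn0 : (0 : ℝ) < n := by linarith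
  have hT0 : (0 : ℝ) < T := (Real.log_pos hn1).trans_le hlog
  have hT : 0 < T := by exact_mod_cast hT0
  have hTn' : (2 : ℝ) ^ 20 * T ≤ n := by
    rw [le_div_iff₀ (by norm_num)] at hTn; linarith
  have hTle : T ≤ n := by
    have : (T : ℝ) ≤ n := by linarith
    exact_mod_cast this
  have hx : (2 : ℝ) ^ 20 ≤ n / T := (le_div_iff₀ hT0).2 hTn'
  set s := Real.log ((n : ℝ) / T) with hs
  have hs0 : 0 < s := Real.log_pos (lt_of_lt_of_le (by norm_num) hx)
  set y := Real.exp (s / 4) with hy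
  have hy0 : 0 < y := Real.exp_pos _
  have hy4 : y ^ 4 = n / T := by
    rw [hy, ← Real.exp_nat_mul, ← Real.exp_log (by positivity : (0 : ℝ) < n / T)]
    congr 1
    push_cast
    ring
  have hy32 : 32 ≤ y := by
    refine le_of_pow_le_pow_left₀ (n := 4) (by norm_num) hy0.le ?_
    rw [hy4]
    exact le_trans (by norm_num) hx
  set t := 1 / 16 * √(s / T) with ht
  have htlt : -(√(s / 8 / T) / 4) < -t := by
    have h0 : 0 < s / T := by positivity
    have h1 : √(s / T) / 3 ≤ √(s / 8 / T) := by
      refine Real.le_sqrt_of_sq_le ?_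
      rw [div_pow, Real.sq_sqrt h0.le, div_right_comm s]
      gcongr
      norm_num
    have h2 : 0 < √(s / T) := Real.sqrt_pos.2 h0
    linarith
  set R := Finset.univ.filter fun a : Fin n → Bool => -√n ≤ signedSum a (fun _ => 1) with hR
  have hRcard : (R.card : ℝ) ≤ 2 ^ n := by
    have : R.card ≤ 2 ^ n := (Finset.card_le_univ R).trans_eq (by simp)
    exact_mod_cast this
  have hRne : R.Nonempty := by
    refine ⟨fun _ => true, Finset.mem_filter.2 ⟨Finset.mem_univ _, ?_⟩⟩
    have : (0 : ℝ) ≤ √n := Real.sqrt_nonneg _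
    simp only [signedSum, boolSign, if_true, Finset.sum_const, Finset.card_univ, Fintype.card_fin,
      nsmul_eq_mul, mul_one]
    linarith
  obtain ⟨f, hfR, hf⟩ := exists_rows_of_card_ge hT hTle R hRne (t := t) (p := y⁻¹ / 16)
    (by have := inv_le_one_of_one_le₀ (by linarith : 1 ≤ y); linarith) (by positivity) (by
      intro w hw hwT
      have h1 := card_ge_of_sparse hT hlog hTn' w hw hwT
      rw [Real.exp_neg] at h1
      calc y⁻¹ / 16 * R.card ≤ y⁻¹ / 16 * 2 ^ n := by gcongr
        _ = 2 ^ n * (y⁻¹ / 16) := mul_comm _ _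
        _ ≤ _ := h1
        _ ≤ _ := by
          gcongr
          intro a ha
          obtain ⟨-, h2, h3⟩ := Finset.mem_filter.1 ha
          exact Finset.mem_filter.2
            ⟨Finset.mem_filter.2 ⟨Finset.mem_univ _, h2⟩, h3.trans_lt htlt⟩) (by
      have hnT : (n : ℝ) = T * y ^ 4 := by rw [hy4]; field_simp
      have hsy : s ≤ 4 * y := by
        have := Real.add_one_le_exp (s / 4)
        linarith
      have h1 : 48 * y * (1 + s) < y ^ 4 - 1 := by
        have h2 : 48 * y * (1 + s) ≤ 48 * y * (1 + 4 * y) := by gcongr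
        have h3 : y ^ 2 * 32 ^ 2 ≤ y ^ 2 * y ^ 2 := by gcongr
        nlinarith
      have h4 : y⁻¹ / 16 * ((n : ℝ) - T) = T * (y ^ 4 - 1) / (16 * y) := by
        rw [hnT]; field_simp
      rw [h4, lt_div_iff₀ (by positivity)]
      have h5 := mul_lt_mul_of_pos_left h1 hT0
      linarith)
  refine ⟨fun i j => boolSign (f i j), fun i j => ?_, fun i => ?_, fun w hwT hw => ?_⟩
  · cases h : f i j <;> simp [boolSign, h]
  · have h1 : -√n ≤ signedSum (f i) (fun _ => 1) := (Finset.mem_filter.1 (hfR i)).2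
    have h2 : Matrix.mulVec (fun i j => boolSign (f i j)) (fun _ => 1 / (n : ℝ)) i =
        1 / n * signedSum (f i) (fun _ => 1) := by
      rw [← signedSum_smul]
      simp [Matrix.mulVec, dotProduct, signedSum]
    have h3 : 1 / √(n : ℝ) = 1 / n * √n := by
      rw [one_div_mul_eq_div, Real.sqrt_div_self']
    rw [h2, h3, ← mul_neg]
    gcongr
  · obtain ⟨i, hi⟩ := hf w hw hwT
    exact (ciInf_le (Set.finite_range _).bddBelow i).trans hi.le
end

section
/- There exist universal constants C, c > 0 and an integer n₀ such that for every n ≥ n₀ and every integer T with ln n ≤ T ≤ n/C, there exists a matrix A ∈ {−1,+1}^{n×n} such that for every vector w ∈ ℝⁿ with ‖w‖₀ ≤ T and ‖w‖₁ = 1, it holds that min_{1≤i≤n} (Aw)_i ≤ −c·√(ln(n/T)/T). -/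
open Finset
open scoped Classical

section SignVectors

variable {ι : Type*} [Fintype ι] [DecidableEq ι]

theorem sum_mul_sign_eq_zero (j : ι) (g : (ι → ℤˣ) → ℝ)
    (hg : ∀ s, g (Pi.mulSingle j (-1) * s) = g s) :
    ∑ s : ι → ℤˣ, g s * ((s j : ℤ) : ℝ) = 0 := by
  have h := Equiv.sum_comp (Equiv.mulLeft (Pi.mulSingle j (-1) : ι → ℤˣ))
    (fun s => g s * ((s j : ℤ) : ℝ))
  simp only [Equiv.coe_mulLeft, hg, Pi.mul_apply, Pi.mulSingle_eq_same,
    Units.val_neg, neg_mul, one_mul, Int.cast_neg, mul_neg,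
    Finset.sum_neg_distrib] at h
  linarith

theorem sign_sq (e : ℤˣ) : ((e : ℤ) : ℝ) ^ 2 = 1 := by
  rcases Int.units_eq_one_or e with h | h <;> simp [h]

theorem signed_sum_flip {ι : Type*} [DecidableEq ι] (u : ι → ℝ) {J : Finset ι} {j : ι} (hj : j ∉ J) (s : ι → ℤˣ) :
    ∑ i ∈ J, (((Pi.mulSingle j (-1) * s : ι → ℤˣ) i : ℤ) : ℝ) * u i
      = ∑ i ∈ J, ((s i : ℤ) : ℝ) * u i := by
  refine Finset.sum_congr rfl fun i hi => ?_
  have : i ≠ j := fun h => hj (h ▸ hi)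
  simp [Pi.mulSingle_eq_of_ne this]

theorem signed_sum_second_moment (u : ι → ℝ) (J : Finset ι) :
    ∑ s : ι → ℤˣ, (∑ i ∈ J, ((s i : ℤ) : ℝ) * u i) ^ 2
      = (∑ i ∈ J, u i ^ 2) * Fintype.card (ι → ℤˣ) := by
  induction J using Finset.induction_on with
  | empty => simp
  | insert j J hj ih =>
    have h0 := sum_mul_sign_eq_zero j (fun s => 2 * u j * ∑ i ∈ J, ((s i : ℤ) : ℝ) * u i)
      (fun s => by simp only [signed_sum_flip u hj s])
    have key : ∀ s : ι → ℤˣ, (∑ i ∈ insert j J, ((s i : ℤ) : ℝ) * u i) ^ 2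
        = (∑ i ∈ J, ((s i : ℤ) : ℝ) * u i) ^ 2
          + (2 * u j * ∑ i ∈ J, ((s i : ℤ) : ℝ) * u i) * ((s j : ℤ) : ℝ) + u j ^ 2 := by
      intro s
      rw [Finset.sum_insert hj]
      linear_combination u j ^ 2 * sign_sq (s j)
    rw [Finset.sum_congr rfl fun s _ => key s]
    simp only [Finset.sum_add_distrib, ih, h0, Finset.sum_insert hj, Finset.sum_const,
      Finset.card_univ, nsmul_eq_mul]
    ring

theorem signed_sum_fourth_moment_le (u : ι → ℝ) (J : Finset ι) :
    ∑ s : ι → ℤˣ, (∑ i ∈ J, ((s i : ℤ) : ℝ) * u i) ^ 4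
      ≤ 3 * (∑ i ∈ J, u i ^ 2) ^ 2 * Fintype.card (ι → ℤˣ) := by
  induction J using Finset.induction_on with
  | empty => simp
  | insert j J hj ih =>
    have h0 := sum_mul_sign_eq_zero j
      (fun s => 4 * u j * (∑ i ∈ J, ((s i : ℤ) : ℝ) * u i) ^ 3
        + 4 * u j ^ 3 * ∑ i ∈ J, ((s i : ℤ) : ℝ) * u i)
      (fun s => by simp only [signed_sum_flip u hj s])
    have key : ∀ s : ι → ℤˣ, (∑ i ∈ insert j J, ((s i : ℤ) : ℝ) * u i) ^ 4
        = (∑ i ∈ J, ((s i : ℤ) : ℝ) * u i) ^ 4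
          + (4 * u j * (∑ i ∈ J, ((s i : ℤ) : ℝ) * u i) ^ 3
            + 4 * u j ^ 3 * ∑ i ∈ J, ((s i : ℤ) : ℝ) * u i) * ((s j : ℤ) : ℝ)
          + 6 * u j ^ 2 * (∑ i ∈ J, ((s i : ℤ) : ℝ) * u i) ^ 2 + u j ^ 4 := by
      intro s
      rw [Finset.sum_insert hj]
      generalize (∑ i ∈ J, ((s i : ℤ) : ℝ) * u i) = X
      have h2 := sign_sq (s j)
      generalize ((s j : ℤ) : ℝ) = e at h2 ⊢
      linear_combination (u j ^ 4 * (e ^ 2 + 1) + 4 * X * e * u j ^ 3 + 6 * X ^ 2 * u j ^ 2) * h2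
    rw [Finset.sum_congr rfl fun s _ => key s]
    simp only [Finset.sum_add_distrib, h0, Finset.sum_insert hj, Finset.sum_const,
      Finset.card_univ, nsmul_eq_mul, ← Finset.mul_sum, signed_sum_second_moment]
    have : 0 ≤ u j ^ 4 * (Fintype.card (ι → ℤˣ) : ℝ) := by positivity
    nlinarith

/-- A signed sum exceeds half its standard deviation with probability at least `1 / 16`. -/
theorem card_le_card_half_deviation_le_signed_sum (u : ι → ℝ) :
    (Fintype.card (ι → ℤˣ) : ℝ) / 16 ≤
      #{s : ι → ℤˣ | √(∑ i, u i ^ 2) / 2 ≤ ∑ i, ((s i : ℤ) : ℝ) * u i} := by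
  set V := ∑ i, u i ^ 2 with hV
  set K : ℝ := ((Fintype.card (ι → ℤˣ) : ℕ) : ℝ) with hK
  set X : (ι → ℤˣ) → ℝ := fun s => ∑ i, ((s i : ℤ) : ℝ) * u i with hX
  have hV0 : 0 ≤ V := by positivity
  have hK0 : 0 ≤ K := by positivity
  change K / 16 ≤ #{s : ι → ℤˣ | √V / 2 ≤ X s}
  rcases hV0.eq_or_lt with h | hpos
  · have hu : ∀ i, u i = 0 := by
      intro i
      have := (Finset.sum_eq_zero_iff_of_nonneg (fun i _ => sq_nonneg (u i))).1 (hV ▸ h.symm) i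
        (Finset.mem_univ i)
      simpa using this
    have : (Finset.univ.filter fun s : ι → ℤˣ => √V / 2 ≤ X s) = Finset.univ := by
      ext s
      simp [hX, hu, ← h]
    rw [this, Finset.card_univ]
    linarith
  have hneg : #{s : ι → ℤˣ | X s ≤ -(√V / 2)} = #{s : ι → ℤˣ | √V / 2 ≤ X s} := by
    refine Finset.card_bij (fun s _ => -s) ?_ (fun _ _ _ _ h => neg_injective h) ?_
    · intro s hs
      simp only [Finset.mem_filter, Finset.mem_univ, true_and, hX, Pi.neg_apply, Units.val_neg,
        Int.cast_neg, neg_mul, Finset.sum_neg_distrib] at hs ⊢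
      linarith
    · intro s hs
      refine ⟨-s, ?_, neg_neg s⟩
      simp only [Finset.mem_filter, Finset.mem_univ, true_and, hX, Pi.neg_apply, Units.val_neg,
        Int.cast_neg, neg_mul, Finset.sum_neg_distrib] at hs ⊢
      linarith
  have hpt : ∀ s, V / 2 * X s ^ 2 - X s ^ 4 / 16 - V ^ 2 / 8 ≤
      V ^ 2 * ((if √V / 2 ≤ X s then 1 else 0) + (if X s ≤ -(√V / 2) then 1 else 0)) := by
    intro s
    have hs := Real.sq_sqrt hV0
    have hs0 := Real.sqrt_nonneg V
    have h1 : V / 2 * X s ^ 2 - X s ^ 4 / 16 - V ^ 2 / 8 ≤ V ^ 2 := by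
      nlinarith [sq_nonneg (X s ^ 2 - 4 * V)]
    split_ifs with ha hb hb
    · nlinarith
    · linarith
    · linarith
    · push Not at ha hb
      have : X s ^ 2 ≤ V / 4 := by nlinarith
      nlinarith [sq_nonneg (X s)]
  have hsum := Finset.sum_le_sum (s := Finset.univ) fun s _ => hpt s
  simp only [Finset.sum_sub_distrib, ← Finset.mul_sum, ← Finset.sum_div, Finset.sum_add_distrib,
    Finset.sum_boole, Finset.sum_const, Finset.card_univ, nsmul_eq_mul] at hsum
  rw [hneg] at hsum
  have h2 : ∑ s, X s ^ 2 = V * K := signed_sum_second_moment u Finset.univ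
  have h4 : ∑ s, X s ^ 4 ≤ 3 * V ^ 2 * K := signed_sum_fourth_moment_le u Finset.univ
  rw [h2] at hsum
  have hfin : V ^ 2 * (K / 16) ≤ V ^ 2 * (#{s : ι → ℤˣ | √V / 2 ≤ X s} : ℝ) := by
    have : 0 ≤ V ^ 2 * K := by positivity
    nlinarith
  exact le_of_mul_le_mul_left hfin (by positivity)

end SignVectors

section Blocks

theorem exists_balanced_coloring {ι : Type*} (S : Finset ι) {T m : ℕ} (hS : #S ≤ T)
    (hm : 0 < m) : ∃ f : ι → Fin m, ∀ b, #{i ∈ S | f i = b} ≤ T / m + 1 := by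
  let g : ι → ℕ := fun i => if h : i ∈ S then S.equivFin ⟨i, h⟩ else 0
  have hlt : ∀ i ∈ S, g i < T := fun i hi => by
    simp only [g, hi, dif_pos]
    exact (S.equivFin ⟨i, hi⟩).2.trans_le hS
  have hinj : ∀ i ∈ S, ∀ j ∈ S, g i = g j → i = j := fun i hi j hj h => by
    simp only [g, hi, hj, dif_pos] at h
    exact congrArg Subtype.val (S.equivFin.injective (Fin.ext h))
  refine ⟨fun i => ⟨g i % m, Nat.mod_lt _ hm⟩, fun b => ?_⟩
  rw [← Finset.card_range (T / m + 1)]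
  refine Finset.card_le_card_of_injOn (fun i => g i / m) ?_ ?_
  · intro i hi
    simp only [Finset.coe_filter, Set.mem_ofPred_eq] at hi
    simp only [Finset.coe_range, Set.mem_Iio]
    exact Nat.lt_succ_of_le (Nat.div_le_div_right (hlt i hi.1).le)
  · intro i hi j hj h
    simp only [Finset.coe_filter, Set.mem_ofPred_eq] at hi hj
    refine hinj i hi.1 j hj.1 ?_
    have hmod : g i % m = g j % m := congrArg Fin.val (hi.2.trans hj.2.symm)
    rw [← Nat.div_add_mod (g i) m, ← Nat.div_add_mod (g j) m, hmod]
    exact congrArg (fun x => m * x + g j % m) h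

variable {ι : Type*} [Fintype ι] [DecidableEq ι]

/-- If blocks of a partition each meet the support of `u` in at most `L` points, then each of
the `m` blocks independently contributes its share of the `ℓ₁` norm. -/
theorem card_le_card_norm_le_signed_sum_of_coloring (u : ι → ℝ) {m L : ℕ} (f : ι → Fin m)
    (hf : ∀ b, #{i | f i = b ∧ u i ≠ 0} ≤ L) :
    (Fintype.card (ι → ℤˣ) : ℝ) / 16 ^ m ≤
      #{s : ι → ℤˣ | (∑ i, |u i|) / (2 * √L) ≤ ∑ i, ((s i : ℤ) : ℝ) * u i} := by
  let glue : (∀ b : Fin m, {i // f i = b} → ℤˣ) → (ι → ℤˣ) := fun t i => t (f i) ⟨i, rfl⟩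
  have hinj : Function.Injective glue := by
    intro t t' h
    funext b ⟨i, hi⟩
    subst hi
    exact congrFun h i
  have hsurj : Function.Surjective glue := fun s => ⟨fun b x => s x.1, rfl⟩
  let good : ∀ b : Fin m, Finset ({i // f i = b} → ℤˣ) := fun b =>
    {s | √(∑ i : {i // f i = b}, u i ^ 2) / 2 ≤ ∑ i : {i // f i = b}, ((s i : ℤ) : ℝ) * u i}
  have hcard : (Fintype.card (ι → ℤˣ) : ℝ) / 16 ^ m
      = ∏ b : Fin m, (Fintype.card ({i // f i = b} → ℤˣ) : ℝ) / 16 := by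
    rw [← Fintype.card_of_bijective ⟨hinj, hsurj⟩, Fintype.card_pi, Finset.prod_div_distrib]
    simp
  calc (Fintype.card (ι → ℤˣ) : ℝ) / 16 ^ m
      = ∏ b : Fin m, (Fintype.card ({i // f i = b} → ℤˣ) : ℝ) / 16 := hcard
    _ ≤ ∏ b : Fin m, (#(good b) : ℝ) := Finset.prod_le_prod (fun _ _ => by positivity)
        fun b _ => card_le_card_half_deviation_le_signed_sum fun i : {i // f i = b} => u i
    _ = (#(Fintype.piFinset good) : ℝ) := by simp
    _ ≤ _ := by
      refine Nat.cast_le.2 (Finset.card_le_card_of_injOn glue ?_ hinj.injOn)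
      intro t ht
      have ht' : ∀ b, √(∑ i : {i // f i = b}, u i ^ 2) / 2 ≤
          ∑ i : {i // f i = b}, ((t b i : ℤ) : ℝ) * u i := by
        simpa [good] using ht
      simp only [Finset.coe_filter, Finset.mem_univ, true_and, Set.mem_ofPred_eq]
      rw [← Fintype.sum_fiberwise f, ← Fintype.sum_fiberwise f (fun i => _ * u i),
        Finset.sum_div]
      refine Finset.sum_le_sum fun b _ => ?_
      have hglue : ∑ i : {i // f i = b}, ((glue t i : ℤ) : ℝ) * u i
          = ∑ i : {i // f i = b}, ((t b i : ℤ) : ℝ) * u i := by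
        refine Finset.sum_congr rfl ?_
        rintro ⟨i, rfl⟩ _
        rfl
      rw [hglue]
      refine le_trans ?_ (ht' b)
      have hcs : ∑ i : {i // f i = b}, |u i| ≤ √L * √(∑ i : {i // f i = b}, u i ^ 2) := by
        rw [← Real.sqrt_mul (Nat.cast_nonneg L)]
        refine Real.le_sqrt_of_sq_le ?_
        have h1 : ∑ i : {i // f i = b}, |u i| = ∑ i with f i = b ∧ u i ≠ 0, |u i| := by
          rw [← Finset.filter_filter, Finset.sum_filter_of_ne (by simp)]
          exact (Finset.sum_subtype _ (by simp) fun i => |u i|).symm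
        have h2 : ∑ i : {i // f i = b}, u i ^ 2 = ∑ i with f i = b ∧ u i ≠ 0, |u i| ^ 2 := by
          rw [← Finset.filter_filter, Finset.sum_filter_of_ne (by simp)]
          simp only [sq_abs]
          exact (Finset.sum_subtype _ (by simp) fun i => u i ^ 2).symm
        rw [h1, h2]
        refine sq_sum_le_card_mul_sum_sq.trans ?_
        gcongr
        exact hf b
      rcases (Real.sqrt_nonneg (L : ℝ)).eq_or_lt with h | h
      · rw [← h]
        simp only [mul_zero, div_zero]
        positivity
      · rw [div_le_div_iff₀ (by positivity) two_pos]
        linarith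

/-- A signed sum of a `T`-sparse vector exceeds `√(m / 8T)` times its `ℓ₁` norm
with probability at least `16⁻ᵐ`. -/
theorem card_le_card_norm_le_signed_sum (u : ι → ℝ) {m T : ℕ} (hm : 0 < m) (hmT : m ≤ T)
    (hu : #{i | u i ≠ 0} ≤ T) :
    (Fintype.card (ι → ℤˣ) : ℝ) / 16 ^ m ≤
      #{s : ι → ℤˣ | √(m / (8 * T)) * ∑ i, |u i| ≤ ∑ i, ((s i : ℤ) : ℝ) * u i} := by
  obtain ⟨f, hf⟩ := exists_balanced_coloring {i | u i ≠ 0} hu hm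
  refine (card_le_card_norm_le_signed_sum_of_coloring u (L := T / m + 1) f fun b => ?_).trans ?_
  · convert hf b using 2
    ext i
    simp [and_comm]
  · refine Nat.cast_le.2 (Finset.card_le_card fun s hs => ?_)
    simp only [Finset.mem_filter, Finset.mem_univ, true_and] at hs ⊢
    refine le_trans ?_ hs
    have hm' : (0 : ℝ) < m := by exact_mod_cast hm
    have hT' : (0 : ℝ) < T := by exact_mod_cast hm.trans_le hmT
    have hL : ((T / m + 1 : ℕ) : ℝ) ≤ 2 * T / m := by
      have h1 : ((T / m : ℕ) : ℝ) ≤ T / m := Nat.cast_div_le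
      have h2 : (1 : ℝ) ≤ T / m := by
        rw [le_div_iff₀ hm']
        simpa using hmT
      push_cast
      rw [two_mul, add_div]
      linarith
    rw [div_eq_inv_mul (∑ i, |u i|)]
    refine mul_le_mul_of_nonneg_right ?_ (Finset.sum_nonneg fun i _ => abs_nonneg (u i))
    have hLpos : (0 : ℝ) < ((T / m + 1 : ℕ) : ℝ) := by positivity
    refine Real.sqrt_le_iff.2 ⟨by positivity, ?_⟩
    rw [inv_pow, mul_pow, Real.sq_sqrt hLpos.le, div_le_iff₀ (by positivity),
      inv_mul_eq_div, le_div_iff₀ (by positivity)]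
    rw [le_div_iff₀ hm'] at hL
    nlinarith

end Blocks

section Counting

theorem sum_weight_Icc_le {y : ℝ} (hy : 0 ≤ y) (N : ℕ) :
    ∑ v ∈ Finset.Icc (-N : ℤ) N, (if v ≠ 0 then y else 1) * (1 / 2 : ℝ) ^ v.natAbs
      ≤ 1 + 2 * y := by
  have key : ∑ v ∈ Finset.Icc (-N : ℤ) N, (if v ≠ 0 then y else 1) * (1 / 2 : ℝ) ^ v.natAbs
      = 1 + 2 * y - 2 * y * (1 / 2) ^ N := by
    induction N with
    | zero => simp
    | succ N ih =>
      have hI : Finset.Icc (-((N + 1 : ℕ) : ℤ)) ((N + 1 : ℕ) : ℤ)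
          = insert (-((N + 1 : ℕ) : ℤ))
            (insert ((N + 1 : ℕ) : ℤ) (Finset.Icc (-N : ℤ) N)) := by
        ext v
        simp only [Finset.mem_Icc, Finset.mem_insert]
        omega
      have h0 : ((N + 1 : ℕ) : ℤ) ≠ 0 := by omega
      rw [hI, Finset.sum_insert, Finset.sum_insert, ih, if_pos h0, if_pos (neg_ne_zero.2 h0),
        Int.natAbs_neg, Int.natAbs_natCast, pow_succ]
      · ring
      · simp only [Finset.mem_Icc]
        omega
      · simp only [Finset.mem_Icc, Finset.mem_insert]
        omega
  rw [key]
  have : 0 ≤ 2 * y * (1 / 2 : ℝ) ^ N := by positivity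
  linarith

/-- Integer vectors with at most `T` nonzero entries and `ℓ₁` norm at most `N`. -/
noncomputable def sparseIntVectors (n T N : ℕ) : Finset (Fin n → ℤ) :=
  {u ∈ Fintype.piFinset fun _ => Finset.Icc (-N : ℤ) N |
    #{i | u i ≠ 0} ≤ T ∧ ∑ i, (u i).natAbs ≤ N}

theorem mem_sparseIntVectors {n T N : ℕ} {u : Fin n → ℤ} (h₀ : #{i | u i ≠ 0} ≤ T)
    (h₁ : ∑ i, (u i).natAbs ≤ N) : u ∈ sparseIntVectors n T N := by
  refine Finset.mem_filter.2 ⟨Fintype.mem_piFinset.2 fun i => ?_, h₀, h₁⟩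
  have := (Finset.single_le_sum (f := fun i => (u i).natAbs) (fun _ _ => Nat.zero_le _)
    (Finset.mem_univ i)).trans h₁
  simp only [Finset.mem_Icc]
  omega

theorem card_sparseIntVectors_le {n T : ℕ} (N : ℕ) (hT : 0 < T) (hTn : T ≤ n) :
    (#(sparseIntVectors n T N) : ℝ) ≤ 2 ^ N * (n / T : ℝ) ^ T * Real.exp (2 * T) := by
  have hT' : (0 : ℝ) < T := by exact_mod_cast hT
  have hn' : (0 : ℝ) < n := by exact_mod_cast hT.trans_le hTn
  set y : ℝ := T / n with hy
  have hy0 : 0 < y := by positivity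
  have hy1 : y ≤ 1 := by
    rw [hy, div_le_one hn']
    exact_mod_cast hTn
  let g : ℤ → ℝ := fun v => (if v ≠ 0 then y else 1) * (1 / 2 : ℝ) ^ v.natAbs
  have hg : ∀ v, 0 ≤ g v := fun v => by
    simp only [g]
    split_ifs <;> positivity
  have hweight : ∀ u ∈ sparseIntVectors n T N, y ^ T * (1 / 2) ^ N ≤ ∏ i, g (u i) := by
    intro u hu
    obtain ⟨-, h₀, h₁⟩ := Finset.mem_filter.1 hu
    simp only [g, Finset.prod_mul_distrib, Finset.prod_pow_eq_pow_sum]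
    rw [← Finset.prod_filter, Finset.prod_const]
    gcongr ?_ * ?_
    · exact pow_le_pow_of_le_one hy0.le hy1 h₀
    · exact pow_le_pow_of_le_one (by norm_num) (by norm_num) h₁
  have htotal : ∑ u ∈ sparseIntVectors n T N, ∏ i, g (u i) ≤ Real.exp (2 * T) := by
    calc ∑ u ∈ sparseIntVectors n T N, ∏ i, g (u i)
        ≤ ∑ u ∈ Fintype.piFinset fun _ : Fin n => Finset.Icc (-N : ℤ) N, ∏ i, g (u i) :=
          Finset.sum_le_sum_of_subset_of_nonneg (Finset.filter_subset _ _)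
            fun u _ _ => Finset.prod_nonneg fun i _ => hg (u i)
      _ = ∏ _i : Fin n, ∑ v ∈ Finset.Icc (-N : ℤ) N, g v :=
          (Finset.prod_univ_sum (fun _ => Finset.Icc (-N : ℤ) N) fun _ v => g v).symm
      _ ≤ ∏ _i : Fin n, Real.exp (2 * y) := by
          refine Finset.prod_le_prod (fun _ _ => Finset.sum_nonneg fun v _ => hg v)
            fun _ _ => (sum_weight_Icc_le hy0.le N).trans ?_
          linarith [Real.add_one_le_exp (2 * y)]
      _ = Real.exp (2 * T) := by
          rw [Finset.prod_const, Finset.card_univ, Fintype.card_fin, ← Real.exp_nat_mul, hy]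
          congr 1
          field_simp
  have h := (Finset.card_nsmul_le_sum _ _ _ hweight).trans htotal
  rw [nsmul_eq_mul] at h
  have hinv : 2 ^ N * (n / T : ℝ) ^ T * (y ^ T * (1 / 2) ^ N) = 1 := by
    have h1 : (n / T : ℝ) * y = 1 := by
      rw [hy]
      field_simp
    calc _ = ((n / T : ℝ) * y) ^ T * (2 * (1 / 2)) ^ N := by rw [mul_pow, mul_pow]; ring
      _ = 1 := by rw [h1]; norm_num
  calc (#(sparseIntVectors n T N) : ℝ)
      = 2 ^ N * (n / T : ℝ) ^ T * (#(sparseIntVectors n T N) * (y ^ T * (1 / 2) ^ N)) := by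
        linear_combination -(#(sparseIntVectors n T N) : ℝ) * hinv
    _ ≤ _ := by gcongr

/-- A Chernoff bound for the lower tail of a number of successes in `n` trials. -/
theorem card_few_successes_le {Ω : Type*} [Fintype Ω] [DecidableEq Ω] (G : Finset Ω) (n b : ℕ) :
    (#{a : Fin n → Ω | #{i | a i ∈ G} ≤ b} : ℝ) ≤
      2 ^ b * (Fintype.card Ω - (#G : ℝ) / 2) ^ n := by
  let h : Ω → ℝ := fun ω => if ω ∈ G then 1 / 2 else 1
  have hh : ∀ ω, 0 ≤ h ω := fun ω => by
    simp only [h]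
    split_ifs <;> norm_num
  have hsum : ∑ ω, h ω = Fintype.card Ω - (#G : ℝ) / 2 := by
    have h1 : ∀ ω, h ω = 1 - (if ω ∈ G then 1 else 0) / 2 := fun ω => by
      simp only [h]
      split_ifs <;> norm_num
    simp [h1, ← Finset.sum_div]
  have hweight : ∀ a ∈ ({a : Fin n → Ω | #{i | a i ∈ G} ≤ b} : Finset _),
      (1 / 2 : ℝ) ^ b ≤ ∏ i, h (a i) := by
    intro a ha
    simp only [h]
    rw [← Finset.prod_filter, Finset.prod_const]
    exact pow_le_pow_of_le_one (by norm_num) (by norm_num) (Finset.mem_filter.1 ha).2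
  have hle : (#{a : Fin n → Ω | #{i | a i ∈ G} ≤ b} : ℝ) * (1 / 2) ^ b
      ≤ (Fintype.card Ω - (#G : ℝ) / 2) ^ n := by
    rw [← hsum, Fintype.sum_pow, ← nsmul_eq_mul]
    exact (Finset.card_nsmul_le_sum _ _ _ hweight).trans
      (Finset.sum_le_sum_of_subset_of_nonneg (Finset.subset_univ _)
        fun a _ _ => Finset.prod_nonneg fun i _ => hh (a i))
  have hinv : (2 : ℝ) ^ b * (1 / 2) ^ b = 1 := by rw [← mul_pow]; norm_num
  calc _ = (2 : ℝ) ^ b * ((#{a : Fin n → Ω | #{i | a i ∈ G} ≤ b} : ℝ) * (1 / 2) ^ b) := by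
        linear_combination -(#{a : Fin n → Ω | #{i | a i ∈ G} ≤ b} : ℝ) * hinv
    _ ≤ _ := by gcongr

end Counting

section Rounding

/-- Fractional coefficients can be rounded so that the error is as small in `ℓ₂` norm as if
the columns of `a` were orthogonal. -/
theorem exists_rounding {κ ι : Type*} [Fintype κ] (a : κ → ι → ℝ) {D : ℝ}
    (hD : ∀ j, ∑ i, a i j ^ 2 ≤ D) (t : ι → ℝ) (ht₀ : ∀ j, 0 ≤ t j) (ht₁ : ∀ j, t j ≤ 1)
    (S : Finset ι) :
    ∃ ε : ι → ℤ, (∀ j, ε j = 0 ∨ ε j = 1) ∧ (∀ j ∉ S, ε j = 0) ∧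
      ∑ i, (∑ j ∈ S, a i j * (t j - ε j)) ^ 2 ≤ #S * D := by
  induction S using Finset.induction_on with
  | empty => exact ⟨0, by simp, by simp, by simp⟩
  | insert k S hk ih =>
    obtain ⟨ε, hε, hεS, hsum⟩ := ih
    set X : κ → ℝ := fun i => ∑ j ∈ S, a i j * (t j - ε j) with hX
    obtain ⟨e, he, hcross⟩ : ∃ e : ℤ, (e = 0 ∨ e = 1) ∧ (t k - e) * ∑ i, X i * a i k ≤ 0 := by
      rcases le_total (∑ i, X i * a i k) 0 with h | h
      · exact ⟨0, Or.inl rfl, mul_nonpos_of_nonneg_of_nonpos (by simpa using ht₀ k) h⟩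
      · exact ⟨1, Or.inr rfl, mul_nonpos_of_nonpos_of_nonneg (by simpa using ht₁ k) h⟩
    refine ⟨Function.update ε k e, fun j => ?_, fun j hj => ?_, ?_⟩
    · by_cases hj : j = k
      · subst hj
        simpa using he
      · simpa [hj] using hε j
    · rw [Finset.mem_insert, not_or] at hj
      simpa [hj.1] using hεS j hj.2
    · have hterm : ∀ i, ∑ j ∈ insert k S, a i j * (t j - (Function.update ε k e j : ℤ))
          = a i k * (t k - e) + X i := by
        intro i
        rw [Finset.sum_insert hk, Function.update_self]
        congr 1
        refine Finset.sum_congr rfl fun j hj => ?_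
        rw [Function.update_of_ne (ne_of_mem_of_not_mem hj hk)]
      have hexp : ∑ i, (a i k * (t k - e) + X i) ^ 2
          = (t k - e) ^ 2 * ∑ i, a i k ^ 2 + 2 * ((t k - e) * ∑ i, X i * a i k)
            + ∑ i, X i ^ 2 := by
        simp only [Finset.mul_sum, ← Finset.sum_add_distrib]
        exact Finset.sum_congr rfl fun i _ => by ring
      have hsq : (t k - e) ^ 2 ≤ 1 := by
        rw [sq_le_one_iff_abs_le_one, abs_le]
        rcases he with rfl | rfl <;> push_cast <;> constructor <;> linarith [ht₀ k, ht₁ k]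
      have hcol : (t k - e) ^ 2 * ∑ i, a i k ^ 2 ≤ D :=
        (mul_le_of_le_one_left (Finset.sum_nonneg fun i _ => sq_nonneg _) hsq).trans (hD k)
      simp only [hterm]
      rw [hexp, Finset.card_insert_of_notMem hk]
      push_cast
      linarith

end Rounding

section Matrices

theorem entropy_lt {q T n : ℝ} (hq : 4096 ≤ q) (hT : 0 < T) (hn : q ^ 4 * T ≤ n) :
    2 * q * T + T * Real.log (n / T) + 2 * T < n / (4 * q) := by
  have hq0 : 0 < q := by linarith
  set R := n / T with hR
  have hnR : n = R * T := by
    rw [hR]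
    field_simp
  have hRq : q ^ 4 ≤ R := by rwa [hR, le_div_iff₀ hT]
  have hR0 : 0 < R := lt_of_lt_of_le (by positivity) hRq
  have hlog : Real.log R ≤ R / q ^ 2 + 2 * q := by
    have h1 : Real.log R = Real.log (R / q ^ 2) + 2 * Real.log q := by
      rw [Real.log_div hR0.ne' (by positivity), Real.log_pow]
      push_cast
      ring
    have h2 := Real.log_le_self (show 0 ≤ R / q ^ 2 by positivity)
    have h3 := Real.log_le_self hq0.le
    linarith
  have hquot : R / q ^ 2 ≤ R / (8 * q) := by
    gcongr
    nlinarith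
  have hbig : 4 * q + 2 < R / (8 * q) := by
    rw [lt_div_iff₀ (by positivity)]
    have : (4 * q + 2) * (8 * q) < q ^ 4 := by
      have h2 : 4096 * 4096 ≤ q ^ 2 := by nlinarith
      nlinarith
    linarith
  have hhalf : R / (4 * q) = R / (8 * q) + R / (8 * q) := by
    field_simp
    norm_num
  have hmain : 2 * q + Real.log R + 2 < R / (4 * q) := by linarith
  calc 2 * q * T + T * Real.log R + 2 * T = (2 * q + Real.log R + 2) * T := by ring
    _ < R / (4 * q) * T := by gcongr
    _ = n / (4 * q) := by rw [hnR]; ring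

/-- A sign matrix in which every sparse integer vector has many large coordinates. -/
theorem exists_sign_matrix {n T m : ℕ} (hm : 3 ≤ m) (hmT : m ≤ T)
    (hn : (16 ^ m) ^ 4 * T ≤ n) :
    ∃ A : Fin n → Fin n → ℤˣ, ∀ u ∈ sparseIntVectors n T (2 * 16 ^ m * T),
      ⌊(n : ℝ) / (4 * 16 ^ m)⌋₊ <
        #{i | √(m / (8 * T)) * ∑ j, |(u j : ℝ)| ≤ ∑ j, ((A i j : ℤ) : ℝ) * u j} := by
  set q : ℝ := 16 ^ m with hq
  set N := 2 * 16 ^ m * T with hN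
  set b := ⌊(n : ℝ) / (4 * q)⌋₊ with hb
  set K : ℝ := ((Fintype.card (Fin n → ℤˣ) : ℕ) : ℝ) with hK
  have hKpos : 0 < K := by
    rw [hK]
    exact_mod_cast Fintype.card_pos
  have hT : 0 < T := by omega
  have hT' : (0 : ℝ) < T := by exact_mod_cast hT
  have hTn : T ≤ n := le_trans (Nat.le_mul_of_pos_left _ (by positivity)) hn
  have hn' : (0 : ℝ) < n := by exact_mod_cast hT.trans_le hTn
  have hq4096 : 4096 ≤ q := by
    calc (4096 : ℝ) = 16 ^ 3 := by norm_num
      _ ≤ 16 ^ m := pow_le_pow_right₀ (by norm_num) hm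
  have hq0 : 0 < q := by linarith
  let good : (Fin n → ℤ) → Finset (Fin n → ℤˣ) := fun u =>
    {s | √(m / (8 * T)) * ∑ j, |(u j : ℝ)| ≤ ∑ j, ((s j : ℤ) : ℝ) * u j}
  let bad : (Fin n → ℤ) → Finset (Fin n → Fin n → ℤˣ) := fun u =>
    {A | #{i | A i ∈ good u} ≤ b}
  have hbad : ∀ u ∈ sparseIntVectors n T N,
      (#(bad u) : ℝ) ≤ K ^ n * Real.exp (-(n / (4 * q))) := by
    intro u hu
    have hgood : K / q ≤ #(good u) :=
      card_le_card_norm_le_signed_sum (fun j => (u j : ℝ)) (by omega) hmT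
        (by simpa using (Finset.mem_filter.1 hu).2.1)
    have hgood' : (#(good u) : ℝ) ≤ K := by
      rw [hK]
      exact_mod_cast Finset.card_le_univ _
    refine (card_few_successes_le (good u) n b).trans ?_
    have h1 : (2 : ℝ) ^ b ≤ Real.exp (n / (4 * q)) := by
      calc (2 : ℝ) ^ b ≤ Real.exp 1 ^ b := by
            gcongr
            linarith [Real.add_one_le_exp 1]
        _ = Real.exp b := by rw [← Real.exp_nat_mul, mul_one]
        _ ≤ Real.exp (n / (4 * q)) := Real.exp_le_exp.2 (Nat.floor_le (by positivity))
    have h2 : (K - (#(good u) : ℝ) / 2) ^ n ≤ K ^ n * Real.exp (-(n / (2 * q))) := by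
      have h3 : K - (#(good u) : ℝ) / 2 ≤ K * Real.exp (-(1 / (2 * q))) := by
        have h4 := mul_le_mul_of_nonneg_left (Real.add_one_le_exp (-(1 / (2 * q)))) hKpos.le
        have h5 : K * (-(1 / (2 * q)) + 1) = K - K / q / 2 := by
          field_simp
          ring
        linarith
      calc (K - (#(good u) : ℝ) / 2) ^ n ≤ (K * Real.exp (-(1 / (2 * q)))) ^ n :=
            pow_le_pow_left₀ (by linarith) h3 n
        _ = K ^ n * Real.exp (-(n / (2 * q))) := by
            rw [mul_pow, ← Real.exp_nat_mul]
            congr 2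
            ring
    calc (2 : ℝ) ^ b * (K - (#(good u) : ℝ) / 2) ^ n
        ≤ Real.exp (n / (4 * q)) * (K ^ n * Real.exp (-(n / (2 * q)))) := by
          refine mul_le_mul h1 h2 (pow_nonneg (by linarith) n) (Real.exp_pos _).le
      _ = K ^ n * Real.exp (-(n / (4 * q))) := by
          rw [mul_left_comm, ← Real.exp_add]
          congr 2
          field_simp
          norm_num
  have hnet : (#(sparseIntVectors n T N) : ℝ) < Real.exp (n / (4 * q)) := by
    refine (card_sparseIntVectors_le N hT hTn).trans_lt ?_
    have h1 : (2 : ℝ) ^ N ≤ Real.exp (2 * q * T) := by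
      calc (2 : ℝ) ^ N ≤ Real.exp 1 ^ N := by
            gcongr
            linarith [Real.add_one_le_exp 1]
        _ = Real.exp (2 * q * T) := by
            rw [← Real.exp_nat_mul, mul_one, hN, hq]
            push_cast
            rfl
    have h2 : (n / T : ℝ) ^ T = Real.exp (T * Real.log (n / T)) := by
      rw [Real.exp_nat_mul, Real.exp_log (by positivity)]
    calc _ ≤ Real.exp (2 * q * T) * Real.exp (T * Real.log (n / T)) * Real.exp (2 * T) := by
          rw [h2]
          gcongr
      _ < Real.exp (n / (4 * q)) := by
          rw [← Real.exp_add, ← Real.exp_add, Real.exp_lt_exp]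
          exact entropy_lt hq4096 hT' (by rw [hq]; exact_mod_cast hn)
  have hunion : #((sparseIntVectors n T N).biUnion bad) < Fintype.card (Fin n → Fin n → ℤˣ) := by
    have hcast : (#((sparseIntVectors n T N).biUnion bad) : ℝ) < K ^ n := by
      calc (#((sparseIntVectors n T N).biUnion bad) : ℝ)
          ≤ ∑ u ∈ sparseIntVectors n T N, (#(bad u) : ℝ) := by
            exact_mod_cast Finset.card_biUnion_le
        _ ≤ #(sparseIntVectors n T N) * (K ^ n * Real.exp (-(n / (4 * q)))) := by
            rw [← nsmul_eq_mul]
            exact Finset.sum_le_card_nsmul _ _ _ hbad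
        _ < Real.exp (n / (4 * q)) * (K ^ n * Real.exp (-(n / (4 * q)))) := by gcongr
        _ = K ^ n := by
            rw [mul_left_comm, ← Real.exp_add, add_neg_cancel, Real.exp_zero, mul_one]
    have hcard : Fintype.card (Fin n → Fin n → ℤˣ) = Fintype.card (Fin n → ℤˣ) ^ n := by
      rw [Fintype.card_fun, Fintype.card_fin]
    rw [hK] at hcast
    rw [hcard]
    exact_mod_cast hcast
  obtain ⟨A, hA⟩ : ∃ A, A ∉ (sparseIntVectors n T N).biUnion bad := by
    by_contra! h
    rw [Finset.eq_univ_of_forall h, Finset.card_univ] at hunion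
    exact hunion.false
  refine ⟨A, fun u hu => ?_⟩
  have h := fun h' => hA (Finset.mem_biUnion.2 ⟨u, hu, h'⟩)
  simpa [bad, good] using h

/-- A vector is controlled through an integer vector obtained by rounding a multiple of it. -/
theorem exists_large_coordinate {n T m : ℕ} (hm : 3 ≤ m) (hT : 0 < T) (A : Fin n → Fin n → ℤˣ)
    (hA : ∀ u ∈ sparseIntVectors n T (2 * 16 ^ m * T), ⌊(n : ℝ) / (4 * 16 ^ m)⌋₊ <
        #{i | √(m / (8 * T)) * ∑ j, |(u j : ℝ)| ≤ ∑ j, ((A i j : ℤ) : ℝ) * u j})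
    (w : Fin n → ℝ) (hw₀ : #{j | w j ≠ 0} ≤ T) (hw₁ : ∑ j, |w j| = 1) :
    ∃ i, √(m / (8 * T)) / 4 ≤ ∑ j, ((A i j : ℤ) : ℝ) * w j := by
  set q : ℝ := 16 ^ m with hq
  have hT' : (0 : ℝ) < T := by exact_mod_cast hT
  have hm' : (3 : ℝ) ≤ m := by exact_mod_cast hm
  have hq4096 : 4096 ≤ q := by
    calc (4096 : ℝ) = 16 ^ 3 := by norm_num
      _ ≤ 16 ^ m := pow_le_pow_right₀ (by norm_num) hm
  have hq0 : 0 < q := by linarith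
  set γ := √(m / (8 * T)) with hγ
  have hγ0 : 0 < γ := Real.sqrt_pos.2 (by positivity)
  have hγsq : γ ^ 2 = m / (8 * T) := Real.sq_sqrt (by positivity)
  set S : Finset (Fin n) := {j | w j ≠ 0} with hS
  have hwS : ∀ j ∉ S, w j = 0 := fun j hj => by simpa [hS] using hj
  set M : ℝ := q * T with hM
  have hM0 : 0 < M := by positivity
  obtain ⟨ε, hε, hεS, hround⟩ := exists_rounding (fun i j => ((A i j : ℤ) : ℝ)) (D := n)
    (fun j => by simp [sign_sq]) (fun j => Int.fract (M * w j)) (fun j => Int.fract_nonneg _)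
    (fun j => (Int.fract_lt_one _).le) S
  set u : Fin n → ℤ := fun j => ⌊M * w j⌋ + ε j with hu
  have huS : ∀ j ∉ S, u j = 0 := fun j hj => by simp [hu, hwS j hj, hεS j hj]
  have hdiff : ∀ j, M * w j - u j = Int.fract (M * w j) - ε j := fun j => by
    simp only [hu, Int.fract]
    push_cast
    ring
  have hclose : ∀ j, |M * w j - u j| ≤ if j ∈ S then 1 else 0 := by
    intro j
    split_ifs with hj
    · rw [hdiff, abs_le]
      have h0 := Int.fract_nonneg (M * w j)
      have h1 := Int.fract_lt_one (M * w j)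
      rcases hε j with h | h <;> rw [h] <;> push_cast <;> constructor <;> linarith
    · simp [hwS j hj, huS j hj]
  have hdist : ∑ j, |M * w j - u j| ≤ T := by
    refine (Finset.sum_le_sum fun j _ => hclose j).trans ?_
    rw [Finset.sum_boole, Finset.filter_univ_mem]
    exact_mod_cast hw₀
  have hnorm : ∑ j, |M * w j| = M := by
    simp only [abs_mul, abs_of_pos hM0, ← Finset.mul_sum, hw₁, mul_one]
  have hTM : T ≤ M / 2 := by
    rw [hM]
    nlinarith
  have hupper : ∑ j, |(u j : ℝ)| ≤ 2 * M := by
    have h : ∑ j, |(u j : ℝ)| ≤ ∑ j, (|M * w j| + |M * w j - u j|) :=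
      Finset.sum_le_sum fun j _ => by
        have := abs_sub_abs_le_abs_sub (u j : ℝ) (M * w j)
        rw [abs_sub_comm] at this
        linarith
    rw [Finset.sum_add_distrib] at h
    linarith
  have hlower : M / 2 ≤ ∑ j, |(u j : ℝ)| := by
    have h : ∑ j, |M * w j| ≤ ∑ j, (|(u j : ℝ)| + |M * w j - u j|) :=
      Finset.sum_le_sum fun j _ => by
        linarith [abs_sub_abs_le_abs_sub (M * w j) (u j : ℝ)]
    rw [Finset.sum_add_distrib] at h
    linarith
  have hmem : u ∈ sparseIntVectors n T (2 * 16 ^ m * T) := by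
    refine mem_sparseIntVectors ((Finset.card_le_card fun j hj => ?_).trans hw₀) ?_
    · by_contra h
      exact (Finset.mem_filter.1 hj).2 (huS j h)
    · have h : ((∑ j, (u j).natAbs : ℕ) : ℝ) ≤ ((2 * 16 ^ m * T : ℕ) : ℝ) := by
        push_cast
        simp only [Nat.cast_natAbs, Int.cast_abs]
        rw [hM, hq] at hupper
        linarith
      exact_mod_cast h
  set E : Finset (Fin n) := {i | γ * M / 4 < |∑ j, ((A i j : ℤ) : ℝ) * (M * w j - u j)|} with hE
  have herr : ∑ i, (∑ j, ((A i j : ℤ) : ℝ) * (M * w j - u j)) ^ 2 ≤ T * n := by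
    have h : ∀ i, ∑ j, ((A i j : ℤ) : ℝ) * (M * w j - u j)
        = ∑ j ∈ S, ((A i j : ℤ) : ℝ) * (Int.fract (M * w j) - ε j) := by
      intro i
      simp only [← hdiff]
      refine (Finset.sum_subset (Finset.subset_univ S) fun j _ hj => ?_).symm
      simp [hwS j hj, huS j hj]
    simp only [h]
    refine hround.trans ?_
    gcongr
  have hEcard : #E ≤ ⌊(n : ℝ) / (4 * q)⌋₊ := by
    refine Nat.le_floor ?_
    have h1 : #E * (γ * M / 4) ^ 2 ≤ T * n := by
      rw [← nsmul_eq_mul]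
      refine (Finset.card_nsmul_le_sum E
        (fun i => (∑ j, ((A i j : ℤ) : ℝ) * (M * w j - u j)) ^ 2) _ fun i hi => ?_).trans
        ((Finset.sum_le_sum_of_subset_of_nonneg (Finset.subset_univ E)
          fun i _ _ => sq_nonneg _).trans herr)
      rw [← sq_abs (∑ j, _)]
      exact pow_le_pow_left₀ (by positivity) (Finset.mem_filter.1 hi).2.le 2
    have h2 : (γ * M / 4) ^ 2 = T * (m * q ^ 2 / 128) := by
      rw [div_pow, mul_pow, hγsq, hM]
      field_simp
      norm_num
    rw [h2, mul_left_comm] at h1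
    have h3 := le_of_mul_le_mul_left h1 hT'
    have h4 : 4 * q ≤ m * q ^ 2 / 128 := by nlinarith
    rw [le_div_iff₀ (by positivity)]
    exact (mul_le_mul_of_nonneg_left h4 (Nat.cast_nonneg _)).trans h3
  obtain ⟨i, hi, hiE⟩ := Finset.exists_mem_notMem_of_card_lt_card (hEcard.trans_lt (hA u hmem))
  refine ⟨i, ?_⟩
  have hgood := (Finset.mem_filter.1 hi).2
  have hsmall : |∑ j, ((A i j : ℤ) : ℝ) * (M * w j - u j)| ≤ γ * M / 4 := by
    simpa [hE] using hiE
  have hsplit : M * ∑ j, ((A i j : ℤ) : ℝ) * w j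
      = ∑ j, ((A i j : ℤ) : ℝ) * u j + ∑ j, ((A i j : ℤ) : ℝ) * (M * w j - u j) := by
    rw [Finset.mul_sum, ← Finset.sum_add_distrib]
    exact Finset.sum_congr rfl fun j _ => by ring
  have hγM := mul_le_mul_of_nonneg_left hlower hγ0.le
  have h := (abs_le.1 hsmall).1
  refine le_of_mul_le_mul_left ?_ hM0
  rw [hsplit]
  linarith

end Matrices

/-- For `ln n ≤ T ≤ n/C` there exists `A ∈ {-1,+1}^{n×n}` such that every `T`-sparse
unit-`ℓ₁` vector `w` has `min_i (Aw)_i ≤ -c √(ln(n/T)/T)`. -/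
theorem small_coordinate_matrix :
    ∃ C c : ℝ, 0 < C ∧ 0 < c ∧ ∃ n₀ : ℕ,
      ∀ n : ℕ, n₀ ≤ n → ∀ T : ℕ,
        Real.log n ≤ (T : ℝ) → (T : ℝ) ≤ (n : ℝ) / C →
          ∃ A : Matrix (Fin n) (Fin n) ℝ, (∀ i j, A i j = -1 ∨ A i j = 1) ∧
            ∀ w : Fin n → ℝ, (Finset.univ.filter (fun j => w j ≠ 0)).card ≤ T →
              (∑ j, |w j|) = 1 →
              (⨅ i, A.mulVec w i) ≤ -(c * Real.sqrt (Real.log ((n : ℝ) / (T : ℝ)) / (T : ℝ))) := by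
  refine ⟨2 ^ 48, 1 / 64, by norm_num, by norm_num, 2, fun n hn T hlog hTn => ?_⟩
  have hn1 : (1 : ℝ) < n := by exact_mod_cast hn
  have hT' : (0 : ℝ) < T := (Real.log_pos hn1).trans_le hlog
  have hT : 0 < T := by exact_mod_cast hT'
  have hTn' : 2 ^ 48 * T ≤ n := by
    rw [le_div_iff₀ (by norm_num)] at hTn
    have h : T * 2 ^ 48 ≤ n := by exact_mod_cast hTn
    omega
  have hdiv : 2 ^ 48 ≤ n / T := (Nat.le_div_iff_mul_le hT).2 hTn'
  set m := Nat.log (2 ^ 16) (n / T) with hm_def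
  have hm : 3 ≤ m := Nat.le_log_of_pow_le (by norm_num) (by simpa using hdiv)
  have hmn : (16 ^ m) ^ 4 * T ≤ n := by
    rw [← pow_mul, mul_comm m, pow_mul]
    exact (Nat.le_div_iff_mul_le hT).1 (Nat.pow_log_le_self (2 ^ 16) (by omega))
  have hnm : n < (2 ^ 16) ^ (m + 1) * T :=
    (Nat.div_lt_iff_lt_mul hT).1 (Nat.lt_pow_succ_log_self (by norm_num) _)
  have hmT : m ≤ T := by
    have h : (m : ℝ) ≤ Real.log n := by
      rw [Real.le_log_iff_exp_le (by linarith)]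
      calc Real.exp m = Real.exp 1 ^ m := by rw [← Real.exp_nat_mul, mul_one]
        _ ≤ 16 ^ m := by
            gcongr
            linarith [Real.exp_one_lt_d9]
        _ ≤ n := by
            refine mod_cast le_trans ?_ hmn
            exact (Nat.le_self_pow (by norm_num) _).trans (Nat.le_mul_of_pos_right _ hT)
    exact_mod_cast h.trans hlog
  obtain ⟨A, hA⟩ := exists_sign_matrix hm hmT hmn
  refine ⟨Matrix.of fun i j => ((A i j : ℤ) : ℝ), fun i j => ?_, fun w hw₀ hw₁ => ?_⟩
  · rcases Int.units_eq_one_or (A i j) with h | h <;> simp [h]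
  · obtain ⟨i, hi⟩ := exists_large_coordinate hm hT A hA (fun j => -w j) (by simpa using hw₀)
      (by simpa using hw₁)
    refine (ciInf_le (Set.finite_range _).bddBelow i).trans ?_
    have hmul : (Matrix.of fun i j => ((A i j : ℤ) : ℝ)).mulVec w i
        = -∑ j, ((A i j : ℤ) : ℝ) * -w j := by
      simp [Matrix.mulVec, dotProduct]
    rw [hmul]
    refine neg_le_neg (le_trans ?_ hi)
    have hlogR : Real.log (n / T) ≤ 32 * m := by
      have h1 : (n / T : ℝ) ≤ (2 ^ 16) ^ (m + 1) := by
        rw [div_le_iff₀ hT']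
        exact_mod_cast hnm.le
      have h2 := Real.log_le_log (by positivity) h1
      rw [← pow_mul, Real.log_pow] at h2
      have h3 := Real.log_two_lt_d9
      have h4 : (3 : ℝ) ≤ m := by exact_mod_cast hm
      push_cast at h2
      nlinarith
    have hsqrt : √(Real.log (n / T) / T) ≤ 16 * √(m / (8 * T)) := by
      refine Real.sqrt_le_iff.2 ⟨by positivity, ?_⟩
      rw [mul_pow, Real.sq_sqrt (by positivity)]
      calc Real.log (n / T) / T ≤ 32 * m / T := by gcongr
        _ = 16 ^ 2 * (m / (8 * T)) := by
          field_simp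
          norm_num
    linarith
end

section
/- There exist universal constants C, c > 0 and an integer n₀ such that for every n ≥ n₀ and every integer T with ln n ≤ T ≤ n/C, there exists a matrix A ∈ {−1,+1}^{n×n} such that, setting ρ* = sup over all w ∈ ℝⁿ with ‖w‖₁ = 1 of min_{1≤i≤n} (Aw)_i, every vector w ∈ ℝⁿ with ‖w‖₀ ≤ T and ‖w‖₁ = 1 satisfies ρ* − min_{1≤i≤n} (Aw)_i ≥ c·√(ln(n/T)/T). -/
open Finset
open scoped Classical

/-- The real number `1` or `-1` encoded by a Boolean. -/
def sgn (b : Bool) : ℝ := if b then 1 else -1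

lemma sgn_not (b : Bool) : sgn (!b) = -sgn b := by cases b <;> simp [sgn]

lemma sgn_eq (b : Bool) : sgn b = -1 ∨ sgn b = 1 := by cases b <;> simp [sgn]

/-- The sum of the signs encoded by a Boolean vector. -/
def signSum {ι : Type*} [Fintype ι] (x : ι → Bool) : ℝ := ∑ i, sgn (x i)

lemma signSum_not {ι : Type*} [Fintype ι] (x : ι → Bool) :
    signSum (fun i => !x i) = -signSum x := by
  simp [signSum, sgn_not]

lemma sum_fin_succ_bool (b : ℕ) (F : ℝ → ℝ) :
    ∑ x : Fin (b + 1) → Bool, F (signSum x) =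
      ∑ x : Fin b → Bool, (F (1 + signSum x) + F (-1 + signSum x)) := by
  rw [← (Fin.consEquiv (fun _ => Bool)).sum_comp, Fintype.sum_prod_type, Fintype.sum_bool,
    ← sum_add_distrib]
  refine sum_congr rfl fun x _ => ?_
  simp [signSum, Fin.consEquiv, Fin.sum_univ_succ, sgn]

lemma sum_signSum_sq (b : ℕ) : ∑ x : Fin b → Bool, signSum x ^ 2 = 2 ^ b * (b : ℝ) := by
  induction b with
  | zero => simp [signSum]
  | succ b ih =>
    rw [sum_fin_succ_bool b (fun s => s ^ 2)]
    have h : ∀ x : Fin b → Bool, (1 + signSum x) ^ 2 + (-1 + signSum x) ^ 2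
        = 2 * signSum x ^ 2 + 2 := fun x => by ring
    simp only [h, sum_add_distrib, ← mul_sum, ih]
    simp
    ring

lemma sum_signSum_pow_four (b : ℕ) :
    ∑ x : Fin b → Bool, signSum x ^ 4 = 2 ^ b * (3 * (b : ℝ) ^ 2 - 2 * b) := by
  induction b with
  | zero => simp [signSum]
  | succ b ih =>
    rw [sum_fin_succ_bool b (fun s => s ^ 4)]
    have h : ∀ x : Fin b → Bool, (1 + signSum x) ^ 4 + (-1 + signSum x) ^ 4
        = 2 * signSum x ^ 4 + 12 * signSum x ^ 2 + 2 := fun x => by ring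
    simp only [h, sum_add_distrib, ← mul_sum, ih, sum_signSum_sq]
    simp
    ring

lemma card_signSum_congr {ι κ : Type*} [Fintype ι] [Fintype κ] [DecidableEq ι] [DecidableEq κ]
    (e : ι ≃ κ) (P : ℝ → Prop) :
    #{x : ι → Bool | P (signSum x)} = #{y : κ → Bool | P (signSum y)} := by
  refine card_equiv (e.arrowCongr (Equiv.refl Bool)) fun x => ?_
  have : signSum (e.arrowCongr (Equiv.refl Bool) x) = signSum x := by
    simp only [signSum, Equiv.arrowCongr_apply, Function.comp, Equiv.refl_apply]
    exact e.symm.sum_comp (fun i => sgn (x i))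
  simp [this]

/-- A Paley–Zygmund bound: a sum of `b` signs is at least `√b / 2` with probability `1 / 10`. -/
lemma card_signSum_ge_sqrt (b : ℕ) (hb : 0 < b) :
    (2 : ℝ) ^ b / 10 ≤ #{x : Fin b → Bool | √b / 2 ≤ signSum x} := by
  have hb' : (0 : ℝ) < b := by exact_mod_cast hb
  have hsq : √(b : ℝ) ^ 2 = b := Real.sq_sqrt hb'.le
  have hs0 : 0 < √(b : ℝ) := Real.sqrt_pos.2 hb'
  have hneg : #{x : Fin b → Bool | signSum x ≤ -(√b / 2)}
      = #{x : Fin b → Bool | √b / 2 ≤ signSum x} := by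
    refine card_bij (fun x _ i => !x i) ?_ ?_ ?_
    · intro x hx
      simp only [mem_filter, mem_univ, true_and, signSum_not] at hx ⊢
      linarith
    · intro x _ y _ h
      funext i
      simpa using congrFun h i
    · intro y hy
      refine ⟨fun i => !y i, ?_, by simp⟩
      simp only [mem_filter, mem_univ, true_and, signSum_not] at hy ⊢
      linarith
  have hpt : ∀ x : Fin b → Bool,
      (signSum x ^ 2 - b / 4) * (7 * b - signSum x ^ 2) ≤ 12 * (b : ℝ) ^ 2 *
        ((if √b / 2 ≤ signSum x then 1 else 0) + (if signSum x ≤ -(√b / 2) then 1 else 0)) := by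
    intro x
    set s := signSum x
    have hbd : (s ^ 2 - b / 4) * (7 * b - s ^ 2) ≤ 12 * (b : ℝ) ^ 2 := by
      nlinarith [sq_nonneg (s ^ 2 - 29 / 8 * b), sq_nonneg (b : ℝ)]
    have hb2 : 0 ≤ (b : ℝ) ^ 2 := sq_nonneg _
    by_cases h1 : √b / 2 ≤ s
    · split_ifs <;> linarith
    · by_cases h2 : s ≤ -(√b / 2)
      · split_ifs; linarith
      · rw [if_neg h1, if_neg h2]
        push Not at h1 h2
        have : s ^ 2 < b / 4 := by nlinarith
        have : 0 ≤ 7 * (b : ℝ) - s ^ 2 := by linarith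
        nlinarith
  have hsum := sum_le_sum fun x (_ : x ∈ (univ : Finset (Fin b → Bool))) => hpt x
  rw [← mul_sum, sum_add_distrib, sum_boole, sum_boole, hneg] at hsum
  have hexp : ∀ x : Fin b → Bool, (signSum x ^ 2 - b / 4) * (7 * b - signSum x ^ 2)
      = 29 / 4 * b * signSum x ^ 2 - signSum x ^ 4 - 7 / 4 * (b : ℝ) ^ 2 := fun x => by ring
  simp only [hexp, sum_sub_distrib, ← mul_sum, sum_signSum_sq, sum_signSum_pow_four] at hsum
  simp only [sum_const, card_univ, Fintype.card_fun, Fintype.card_bool, Fintype.card_fin,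
    nsmul_eq_mul, Nat.cast_pow, Nat.cast_ofNat] at hsum
  set N : ℝ := (#{x : Fin b → Bool | √b / 2 ≤ signSum x} : ℝ)
  have h2 : (0 : ℝ) < 2 ^ b := by positivity
  by_contra hlt
  push Not at hlt
  nlinarith [mul_pos h2 hb', mul_pos h2 (pow_pos hb' 2), mul_lt_mul_of_pos_left hlt (pow_pos hb' 2)]

lemma card_signSum_blocks (k b : ℕ) (hb : 0 < b) :
    ((2 : ℝ) ^ b / 10) ^ k ≤ #{y : Fin k × Fin b → Bool | k * (√b / 2) ≤ signSum y} := by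
  set G : Finset (Fin b → Bool) := {x | √b / 2 ≤ signSum x} with hG
  have hle : #(Fintype.piFinset fun _ : Fin k => G)
      ≤ #{y : Fin k × Fin b → Bool | k * (√b / 2) ≤ signSum y} := by
    refine card_le_card_of_injOn (Equiv.curry (Fin k) (Fin b) Bool).symm ?_
      (Equiv.injective _).injOn
    intro f hf
    simp only [coe_filter, mem_univ, true_and, Set.mem_ofPred_eq]
    have hf' : ∀ i, √b / 2 ≤ signSum (f i) := by simpa [hG] using hf
    calc (k : ℝ) * (√b / 2) = ∑ _i : Fin k, √b / 2 := by simp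
      _ ≤ ∑ i : Fin k, signSum (f i) := sum_le_sum fun i _ => hf' i
      _ = _ := by simp [signSum, Fintype.sum_prod_type]
  rw [Fintype.card_piFinset, prod_const, card_univ, Fintype.card_fin] at hle
  calc ((2 : ℝ) ^ b / 10) ^ k ≤ (#G : ℝ) ^ k := by
        gcongr
        exact card_signSum_ge_sqrt b hb
    _ ≤ _ := by exact_mod_cast hle

/-- The Chebyshev inequality for a sum of `t` signs. -/
lemma card_abs_signSum_le (t : ℕ) (θ : ℝ) (hθ : 0 < θ) (h : 2 * (t : ℝ) ≤ θ ^ 2) :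
    (2 : ℝ) ^ t / 2 ≤ #{x : Fin t → Bool | |signSum x| ≤ θ} := by
  have hpt : ∀ x : Fin t → Bool,
      θ ^ 2 * (1 - (if |signSum x| ≤ θ then 1 else 0)) ≤ signSum x ^ 2 := by
    intro x
    split_ifs with hx
    · simp [sq_nonneg]
    · push Not at hx
      rw [← sq_abs (signSum x)]
      nlinarith
  have hsum := sum_le_sum fun x (_ : x ∈ (univ : Finset (Fin t → Bool))) => hpt x
  rw [← mul_sum, sum_sub_distrib, sum_boole, sum_signSum_sq] at hsum
  simp only [sum_const, card_univ, Fintype.card_fun, Fintype.card_bool, Fintype.card_fin,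
    nsmul_eq_mul, Nat.cast_pow, Nat.cast_ofNat, mul_one] at hsum
  have h2 : (0 : ℝ) < 2 ^ t := by positivity
  by_contra hlt
  push Not at hlt
  nlinarith [mul_lt_mul_of_pos_left hlt (pow_pos hθ 2)]

/-- Negate the entries of a Boolean vector on `S`. -/
noncomputable def flipOn {α : Type*} (S : Finset α) (x : α → Bool) : α → Bool :=
  fun k => if k ∈ S then !x k else x k

lemma flipOn_flipOn {α : Type*} (S : Finset α) (x : α → Bool) : flipOn S (flipOn S x) = x := by
  funext k
  by_cases hk : k ∈ S <;> simp [flipOn, hk]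

section Rows

variable {α : Type*} [Fintype α]

/-- The vectors whose sign sum stays at least `θ` when the entries in `S` are negated. -/
noncomputable def flippable (θ : ℝ) (S : Finset α) : Finset (α → Bool) :=
  {x | θ ≤ signSum x ∧ θ ≤ signSum (flipOn S x)}

/-- Negate the entries in `S` of flippable vectors. -/
noncomputable def flipRow (θ : ℝ) (S : Finset α) (x : α → Bool) : α → Bool :=
  if x ∈ flippable θ S then flipOn S x else x

lemma flipOn_mem_flippable {θ : ℝ} {S : Finset α} {x : α → Bool} (hx : x ∈ flippable θ S) :
    flipOn S x ∈ flippable θ S := by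
  simp only [flippable, mem_filter, mem_univ, true_and, flipOn_flipOn] at hx ⊢
  exact hx.symm

lemma flipRow_involutive (θ : ℝ) (S : Finset α) : Function.Involutive (flipRow θ S) := by
  intro x
  by_cases hx : x ∈ flippable θ S
  · simp [flipRow, hx, flipOn_mem_flippable hx, flipOn_flipOn]
  · simp [flipRow, hx]

lemma le_signSum_flipRow {θ : ℝ} {S : Finset α} {x : α → Bool} (hx : θ ≤ signSum x) :
    θ ≤ signSum (flipRow θ S x) := by
  by_cases h : x ∈ flippable θ S
  · rw [flipRow, if_pos h]
    exact (mem_filter.1 h).2.2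
  · rwa [flipRow, if_neg h]

lemma card_flippable (k b : ℕ) (hk : 32 ≤ k) (hb : 0 < b) (S : Finset α) (hS : #S = k * b)
    (hα : Fintype.card α = 2 * (k * b)) :
    (1 / 10 : ℝ) ^ k / 2 * 2 ^ Fintype.card α ≤ #(flippable (k * √b / 4) S) := by
  set θ : ℝ := k * √b / 4 with hθ
  have hk' : (32 : ℝ) ≤ k := by exact_mod_cast hk
  have hb' : (0 : ℝ) < b := by exact_mod_cast hb
  have hsq : √(b : ℝ) ^ 2 = b := Real.sq_sqrt hb'.le
  have hs0 : 0 < √(b : ℝ) := Real.sqrt_pos.2 hb'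
  have hcS : Fintype.card {x // x ∈ S} = k * b := by rw [Fintype.card_coe, hS]
  have hcS' : Fintype.card {x // ¬ x ∈ S} = k * b := by
    rw [Fintype.card_subtype_compl, hα]
    have : Fintype.card {x // x ∈ S} = k * b := hcS
    omega
  have eX : {x // x ∈ S} ≃ Fin (k * b) := Fintype.equivFinOfCardEq hcS
  have eY : {x // ¬ x ∈ S} ≃ Fin k × Fin b := Fintype.equivOfCardEq (by simp [hcS'])
  set X : Finset ({x // x ∈ S} → Bool) := {x | |signSum x| ≤ θ} with hX
  set Y : Finset ({x // ¬ x ∈ S} → Bool) := {y | k * (√b / 2) ≤ signSum y} with hY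
  have hXc : (2 : ℝ) ^ (k * b) / 2 ≤ #X := by
    rw [hX, card_signSum_congr eX (fun s => |s| ≤ θ)]
    refine card_abs_signSum_le _ θ (by positivity) ?_
    have : θ ^ 2 = k * (k * b) / 16 := by rw [hθ, div_pow, mul_pow, hsq]; ring
    rw [this]
    push_cast
    nlinarith [mul_pos (show (0 : ℝ) < k by linarith) hb']
  have hYc : ((2 : ℝ) ^ b / 10) ^ k ≤ #Y := by
    rw [hY, card_signSum_congr eY (fun s => k * (√b / 2) ≤ s)]
    exact card_signSum_blocks k b hb
  have hle : #(X ×ˢ Y) ≤ #(flippable θ S) := by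
    refine card_le_card_of_injOn (Equiv.piEquivPiSubtypeProd (fun x => x ∈ S) fun _ => Bool).symm
      ?_ (Equiv.injective _).injOn
    rintro ⟨x, y⟩ hxy
    have hxy' : |signSum x| ≤ θ ∧ k * (√b / 2) ≤ signSum y := by simpa [hX, hY] using hxy
    have habs := abs_le.1 hxy'.1
    have e1 : signSum ((Equiv.piEquivPiSubtypeProd (fun x => x ∈ S) fun _ => Bool).symm (x, y))
        = signSum x + signSum y := by
      unfold signSum
      rw [← Fintype.sum_subtype_add_sum_subtype (fun x => x ∈ S)]
      congr 1 <;> refine sum_congr (by ext; simp) fun i _ => ?_ <;>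
        simp [Equiv.piEquivPiSubtypeProd, i.2]
    have e2 : signSum (flipOn S
        ((Equiv.piEquivPiSubtypeProd (fun x => x ∈ S) fun _ => Bool).symm (x, y)))
        = -signSum x + signSum y := by
      unfold signSum
      rw [← Fintype.sum_subtype_add_sum_subtype (fun x => x ∈ S), ← sum_neg_distrib]
      congr 1 <;> refine sum_congr (by ext; simp) fun i _ => ?_ <;>
        simp [Equiv.piEquivPiSubtypeProd, flipOn, i.2, sgn_not]
    have hd : (k : ℝ) * (√b / 2) = 2 * θ := by rw [hθ]; ring
    simp only [flippable, coe_filter, mem_univ, true_and, Set.mem_ofPred_eq, e1, e2]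
    constructor <;> linarith [habs.1, habs.2, hxy'.2]
  rw [card_product] at hle
  calc (1 / 10 : ℝ) ^ k / 2 * 2 ^ Fintype.card α
      = (2 : ℝ) ^ (k * b) / 2 * (2 ^ b / 10) ^ k := by
        rw [hα, two_mul, pow_add, div_pow (2 ^ b : ℝ), ← pow_mul, mul_comm b k, one_div_pow]
        ring
    _ ≤ #X * #Y := by gcongr
    _ ≤ _ := by exact_mod_cast hle

/-- All rows lie in an open half-space whose normal vector is supported on `S`. -/
def Separable {n : ℕ} (S : Finset α) (a : Fin n → α → Bool) : Prop :=
  ∃ w : α → ℝ, (∀ k ∉ S, w k = 0) ∧ ∀ i, 0 < ∑ k, sgn (a i k) * w k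

/-- Apply `flipRow` to the rows indexed by `ε`. -/
noncomputable def flipRows {n : ℕ} (θ : ℝ) (S : Finset α) (ε : Finset (Fin n))
    (a : Fin n → α → Bool) : Fin n → α → Bool :=
  fun i => if i ∈ ε then flipRow θ S (a i) else a i

lemma flipRows_involutive {n : ℕ} (θ : ℝ) (S : Finset α) (ε : Finset (Fin n)) :
    Function.Involutive (flipRows θ S ε) := by
  intro a
  funext i
  by_cases hi : i ∈ ε <;> simp [flipRows, hi, flipRow_involutive θ S (a i)]

lemma sum_flipOn_mul (S : Finset α) (x : α → Bool) (w : α → ℝ) (hw : ∀ k ∉ S, w k = 0) :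
    ∑ k, sgn (flipOn S x k) * w k = -∑ k, sgn (x k) * w k := by
  rw [← sum_neg_distrib]
  refine sum_congr rfl fun k _ => ?_
  by_cases hk : k ∈ S
  · simp [flipOn, hk, sgn_not]
  · simp [hw k hk]

/-- Half-spaces with normal vector supported on `S` shatter at most `#S` vectors. -/
lemma card_le_of_shatters {n : ℕ} (θ : ℝ) (S : Finset α) (a : Fin n → α → Bool)
    (J : Finset (Fin n)) (hJ : ∀ i ∈ J, a i ∈ flippable θ S)
    (hsh : Shatters ({ε | Separable S (flipRows θ S ε a)} : Finset (Finset (Fin n))) J) :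
    #J ≤ #S := by
  by_contra hlt
  push Not at hlt
  have hdep : ¬ LinearIndependent ℝ (fun (i : J) (k : S) => sgn (a i k)) := by
    intro h
    have := h.fintype_card_le_finrank
    simp at this
    omega
  obtain ⟨g, hg, i₀, hi₀⟩ := Fintype.not_linearIndependent_iff.1 hdep
  obtain ⟨ε, hε, hεJ⟩ := hsh (t := {i ∈ J | ∃ h : i ∈ J, g ⟨i, h⟩ < 0}) (filter_subset _ _)
  obtain ⟨w, hw, hpos⟩ := (mem_filter.1 hε).2
  have hmem : ∀ i : J, (i : Fin n) ∈ ε ↔ g i < 0 := by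
    intro i
    have := Finset.ext_iff.1 hεJ i
    simpa using this
  have hterm : ∀ i : J, g i ≠ 0 → 0 < g i * ∑ k, sgn (a i k) * w k := by
    intro i hgi
    have hp := hpos i
    by_cases hneg : g i < 0
    · have e : flipRows θ S ε a i = flipOn S (a i) := by
        simp [flipRows, flipRow, (hmem i).2 hneg, hJ i i.2]
      rw [e, sum_flipOn_mul S _ w hw] at hp
      exact mul_pos_of_neg_of_neg hneg (by linarith)
    · have e : flipRows θ S ε a i = a i := by
        simp [flipRows, mt (hmem i).1 hneg]
      rw [e] at hp
      exact mul_pos (lt_of_le_of_ne (not_lt.1 hneg) (Ne.symm hgi)) hp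
  have hsum : 0 < ∑ i : J, g i * ∑ k, sgn (a i k) * w k := by
    refine sum_pos' (fun i _ => ?_) ⟨i₀, mem_univ _, hterm i₀ hi₀⟩
    by_cases hgi : g i = 0
    · simp [hgi]
    · exact (hterm i hgi).le
  have hzero : ∑ i : J, g i * ∑ k, sgn (a i k) * w k = 0 := by
    simp_rw [mul_sum]
    rw [sum_comm]
    refine sum_eq_zero fun k _ => ?_
    by_cases hk : k ∈ S
    · have := congrFun hg ⟨k, hk⟩
      simp only [Finset.sum_apply, Pi.smul_apply, smul_eq_mul, Pi.zero_apply] at this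
      simp_rw [← mul_assoc]
      rw [← sum_mul, this, zero_mul]
    · simp [hw k hk]
  exact hsum.ne' hzero

lemma card_separable_flips {n : ℕ} (θ : ℝ) (S : Finset α) (a : Fin n → α → Bool) :
    (#{ε : Finset (Fin n) | Separable S (flipRows θ S ε a)} : ℝ) ≤
      2 ^ #S * ∏ i, (1 + if a i ∈ flippable θ S then (1 / 2 : ℝ) else 1) := by
  set 𝒜 : Finset (Finset (Fin n)) := {ε | Separable S (flipRows θ S ε a)} with h𝒜
  have hprod : ∀ J : Finset (Fin n),
      ∏ i ∈ J, (if a i ∈ flippable θ S then (1 / 2 : ℝ) else 1)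
        = (1 / 2) ^ #{i ∈ J | a i ∈ flippable θ S} := by
    intro J
    rw [← prod_filter, prod_const]
  have hJ : ∀ J ∈ 𝒜.shatterer,
      (1 : ℝ) ≤ 2 ^ #S * ∏ i ∈ J, (if a i ∈ flippable θ S then (1 / 2 : ℝ) else 1) := by
    intro J hJ
    have hc : #{i ∈ J | a i ∈ flippable θ S} ≤ #S :=
      card_le_of_shatters θ S a _ (fun i hi => (mem_filter.1 hi).2)
        ((mem_shatterer.1 hJ).mono_right (filter_subset _ _))
    rw [hprod]
    calc (1 : ℝ) = 2 ^ #S * (1 / 2) ^ #S := by rw [← mul_pow]; norm_num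
      _ ≤ _ := by
        gcongr 2 ^ #S * ?_
        exact pow_le_pow_of_le_one (by norm_num) (by norm_num) hc
  calc (#𝒜 : ℝ) ≤ #𝒜.shatterer := by exact_mod_cast card_le_card_shatterer 𝒜
    _ = ∑ _J ∈ 𝒜.shatterer, (1 : ℝ) := by simp
    _ ≤ ∑ J ∈ 𝒜.shatterer,
        2 ^ #S * ∏ i ∈ J, (if a i ∈ flippable θ S then (1 / 2 : ℝ) else 1) := sum_le_sum hJ
    _ ≤ ∑ J : Finset (Fin n),
        2 ^ #S * ∏ i ∈ J, (if a i ∈ flippable θ S then (1 / 2 : ℝ) else 1) := by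
      refine sum_le_sum_of_subset_of_nonneg (subset_univ _) fun J _ _ => ?_
      rw [hprod]
      positivity
    _ = _ := by rw [← mul_sum, prod_one_add, powerset_univ]

/-- The vectors with sign sum at least `θ`. -/
noncomputable def heavy (α : Type*) [Fintype α] (θ : ℝ) : Finset (α → Bool) := {x | θ ≤ signSum x}

lemma card_separable_le (n : ℕ) (θ : ℝ) (S : Finset α) :
    (2 : ℝ) ^ n * #{a ∈ Fintype.piFinset fun _ : Fin n => heavy α θ | Separable S a} ≤
      2 ^ #S * (2 * #(heavy α θ) - #(flippable θ S) / 2) ^ n := by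
  set P := Fintype.piFinset fun _ : Fin n => heavy α θ with hP
  have hmaps : ∀ (ε : Finset (Fin n)) (a), a ∈ P → flipRows θ S ε a ∈ P := by
    intro ε a ha
    simp only [hP, Fintype.mem_piFinset, heavy, mem_filter, mem_univ, true_and] at ha ⊢
    intro i
    by_cases hi : i ∈ ε
    · simpa [flipRows, hi] using le_signSum_flipRow (ha i)
    · simpa [flipRows, hi] using ha i
  have hinv : ∀ ε : Finset (Fin n),
      #{a ∈ P | Separable S a} = #{a ∈ P | Separable S (flipRows θ S ε a)} := by
    intro ε
    refine card_nbij' (flipRows θ S ε) (flipRows θ S ε) ?_ ?_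
      (fun a _ => flipRows_involutive θ S ε a) (fun a _ => flipRows_involutive θ S ε a)
    · intro a ha
      simp only [coe_filter, Set.mem_ofPred_eq] at ha ⊢
      exact ⟨hmaps ε a ha.1, by rw [flipRows_involutive θ S ε a]; exact ha.2⟩
    · intro a ha
      simp only [coe_filter, Set.mem_ofPred_eq] at ha ⊢
      exact ⟨hmaps ε a ha.1, ha.2⟩
  have hsub : flippable θ S ⊆ heavy α θ := by
    intro x hx
    simp only [flippable, heavy, mem_filter, mem_univ, true_and] at hx ⊢
    exact hx.1
  have hrow : ∑ x ∈ heavy α θ, (1 + if x ∈ flippable θ S then (1 / 2 : ℝ) else 1)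
      = 2 * #(heavy α θ) - #(flippable θ S) / 2 := by
    have : ∀ x, (1 + if x ∈ flippable θ S then (1 / 2 : ℝ) else 1)
        = 2 - (if x ∈ flippable θ S then (1 : ℝ) else 0) / 2 := by
      intro x
      split_ifs <;> norm_num
    simp_rw [this]
    rw [sum_sub_distrib, ← sum_div, sum_boole, filter_mem_eq_inter, inter_eq_right.2 hsub]
    simp [mul_comm]
  calc (2 : ℝ) ^ n * #{a ∈ P | Separable S a}
      = ∑ ε : Finset (Fin n), (#{a ∈ P | Separable S (flipRows θ S ε a)} : ℝ) := by
        simp_rw [← hinv]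
        simp
    _ = ∑ a ∈ P, (#{ε : Finset (Fin n) | Separable S (flipRows θ S ε a)} : ℝ) := by
        simp_rw [← sum_boole]
        exact sum_comm
    _ ≤ ∑ a ∈ P, 2 ^ #S * ∏ i, (1 + if a i ∈ flippable θ S then (1 / 2 : ℝ) else 1) :=
        sum_le_sum fun a _ => card_separable_flips θ S a
    _ = 2 ^ #S * (2 * #(heavy α θ) - #(flippable θ S) / 2) ^ n := by
        rw [← mul_sum, hP, sum_prod_piFinset _
          (fun (_ : Fin n) x => 1 + if x ∈ flippable θ S then (1 / 2 : ℝ) else 1), hrow]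
        simp

/-- Some family of `n` heavy rows is not separated by any sparse vector. -/
lemma exists_not_separable (n k b : ℕ) (hk : 32 ≤ k) (hb : 0 < b)
    (hα : Fintype.card α = 2 * (k * b))
    (hn : 3 * ((k * b : ℕ) : ℝ) < (1 / 10 : ℝ) ^ k / 8 * n) :
    ∃ a : Fin n → α → Bool, (∀ i, k * √b / 4 ≤ signSum (a i)) ∧
      ∀ S : Finset α, #S = k * b → ¬ Separable S a := by
  set θ : ℝ := k * √b / 4 with hθ
  set P := Fintype.piFinset fun _ : Fin n => heavy α θ with hP
  set p : ℝ := (1 / 10 : ℝ) ^ k / 2 with hp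
  set h : ℝ := (#(heavy α θ) : ℝ) with hh
  have hp0 : 0 < p := by positivity
  have hh2 : h ≤ 2 ^ Fintype.card α := by
    have := card_le_univ (heavy α θ)
    rw [Fintype.card_fun, Fintype.card_bool] at this
    rw [hh]
    exact_mod_cast this
  have hflip : ∀ S : Finset α, #S = k * b → p * 2 ^ Fintype.card α ≤ #(flippable θ S) :=
    fun S hS => card_flippable k b hk hb S hS hα
  have hsub : ∀ S : Finset α, (#(flippable θ S) : ℝ) ≤ h := by
    intro S
    refine Nat.cast_le.2 (card_le_card fun x hx => ?_)
    simp only [flippable, heavy, mem_filter, mem_univ, true_and] at hx ⊢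
    exact hx.1
  have hpos : 0 < h := by
    obtain ⟨S, -, hS⟩ := exists_superset_card_eq (s := (∅ : Finset α)) (n := k * b) (by simp)
      (by omega)
    exact lt_of_lt_of_le (by positivity) ((hflip S hS).trans (hsub S))
  have hbad : ∀ S : Finset α, #S = k * b →
      (#{a ∈ P | Separable S a} : ℝ) ≤ 2 ^ (k * b) * h ^ n * Real.exp (-(p / 4 * n)) := by
    intro S hS
    have h1 := card_separable_le n θ S
    rw [hS] at h1
    have h2 : (2 * h - #(flippable θ S) / 2) ^ n ≤ (2 * h * Real.exp (-(p / 4))) ^ n := by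
      refine pow_le_pow_left₀ ?_ ?_ n
      · linarith [hsub S]
      · have e := Real.add_one_le_exp (-(p / 4))
        have hf : p * h ≤ #(flippable θ S) :=
          (mul_le_mul_of_nonneg_left hh2 hp0.le).trans (hflip S hS)
        nlinarith
    have h3 : (2 * h * Real.exp (-(p / 4))) ^ n
        = 2 ^ n * (h ^ n * Real.exp (-(p / 4 * n))) := by
      rw [mul_pow, mul_pow, ← Real.exp_nat_mul, mul_assoc]
      congr 3
      ring
    have h4 : (2 : ℝ) ^ n * #{a ∈ P | Separable S a}
        ≤ 2 ^ n * (2 ^ (k * b) * h ^ n * Real.exp (-(p / 4 * n))) := by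
      refine h1.trans ?_
      calc _ ≤ 2 ^ (k * b) * (2 ^ n * (h ^ n * Real.exp (-(p / 4 * n)))) := by
            rw [← h3]
            gcongr
        _ = _ := by ring
    exact le_of_mul_le_mul_left h4 (by positivity)
  have hunion : (#((powersetCard (k * b) univ).biUnion fun S => {a ∈ P | Separable S a}) : ℝ)
      < #P := by
    calc (#((powersetCard (k * b) univ).biUnion fun S => {a ∈ P | Separable S a}) : ℝ)
        ≤ ∑ S ∈ powersetCard (k * b) (univ : Finset α), (#{a ∈ P | Separable S a} : ℝ) := by
          exact_mod_cast card_biUnion_le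
      _ ≤ ∑ S ∈ powersetCard (k * b) (univ : Finset α),
          2 ^ (k * b) * h ^ n * Real.exp (-(p / 4 * n)) :=
          sum_le_sum fun S hS => hbad S (mem_powersetCard.1 hS).2
      _ = ((2 * (k * b)).choose (k * b) : ℝ) * 2 ^ (k * b) * Real.exp (-(p / 4 * n)) * h ^ n := by
          rw [sum_const, card_powersetCard, card_univ, hα, nsmul_eq_mul]
          ring
      _ ≤ 2 ^ (2 * (k * b)) * 2 ^ (k * b) * Real.exp (-(p / 4 * n)) * h ^ n := by
          gcongr
          exact_mod_cast Nat.choose_le_two_pow _ _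
      _ < 1 * h ^ n := by
          refine mul_lt_mul_of_pos_right ?_ (pow_pos hpos n)
          have e1 : (2 : ℝ) ≤ Real.exp 1 := by linarith [Real.add_one_le_exp (1 : ℝ)]
          calc (2 : ℝ) ^ (2 * (k * b)) * 2 ^ (k * b) * Real.exp (-(p / 4 * n))
              = 2 ^ (3 * (k * b)) * Real.exp (-(p / 4 * n)) := by
                rw [← pow_add]
                ring_nf
            _ ≤ Real.exp 1 ^ (3 * (k * b)) * Real.exp (-(p / 4 * n)) := by gcongr
            _ = Real.exp (3 * ((k * b : ℕ) : ℝ) - p / 4 * n) := by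
                rw [← Real.exp_nat_mul, ← Real.exp_add]
                congr 1
                push_cast
                ring
            _ < 1 := by
                rw [Real.exp_lt_one_iff]
                have : p / 4 * n = (1 / 10 : ℝ) ^ k / 8 * n := by rw [hp]; ring
                linarith
      _ = #P := by
          rw [hP, Fintype.card_piFinset, prod_const, card_univ, Fintype.card_fin]
          simp [hh]
  obtain ⟨a, haP, ha⟩ := exists_mem_notMem_of_card_lt_card (Nat.cast_lt.1 hunion)
  refine ⟨a, fun i => ?_, fun S hS hsep => ha ?_⟩
  · have := Fintype.mem_piFinset.1 haP i
    simpa [heavy] using this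
  · exact mem_biUnion.2 ⟨S, mem_powersetCard.2 ⟨subset_univ _, hS⟩, mem_filter.2 ⟨haP, hsep⟩⟩

end Rows

lemma iInf_mulVec_le_one {n : ℕ} (i₀ : Fin n) (A : Matrix (Fin n) (Fin n) ℝ)
    (hA : ∀ i j, A i j = -1 ∨ A i j = 1) (u : Fin n → ℝ) (hu : ∑ j, |u j| = 1) :
    ⨅ i, A.mulVec u i ≤ 1 := by
  refine (ciInf_le (Finite.bddBelow_range _) i₀).trans ?_
  rw [← hu, Matrix.mulVec, dotProduct]
  refine sum_le_sum fun j _ => ?_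
  rcases hA i₀ j with h | h <;> rw [h]
  · linarith [neg_abs_le (u j)]
  · linarith [le_abs_self (u j)]

/-- Repeating columns turns an `n × m` family of heavy rows that no sparse vector separates into
a square matrix with a margin gap. -/
lemma exists_matrix_gap {n m t : ℕ} (hm : 0 < m) (hmn : m ≤ n) (htm : t ≤ m) (θ : ℝ)
    (a : Fin n → Fin m → Bool) (ha : ∀ i, θ ≤ signSum (a i))
    (hsep : ∀ S : Finset (Fin m), #S = t → ¬ Separable S a) :
    ∃ A : Matrix (Fin n) (Fin n) ℝ, (∀ i j, A i j = -1 ∨ A i j = 1) ∧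
      ∀ w : Fin n → ℝ, #{j | w j ≠ 0} ≤ t →
        θ / m ≤ (⨆ u : {u : Fin n → ℝ // (∑ j, |u j|) = 1}, ⨅ i, A.mulVec u.1 i) -
          (⨅ i, A.mulVec w i) := by
  have hm' : (0 : ℝ) < m := by exact_mod_cast hm
  let f : Fin n → Fin m := fun j => if h : j.1 < m then ⟨j, h⟩ else ⟨0, hm⟩
  let g : Fin m ↪ Fin n := Fin.castLEEmb hmn
  have hfg : ∀ k, f (g k) = k := fun k => by simp [f, g]
  let i₀ : Fin n := ⟨0, hm.trans_le hmn⟩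
  have : Nonempty (Fin n) := ⟨i₀⟩
  let A : Matrix (Fin n) (Fin n) ℝ := fun i j => sgn (a i (f j))
  have hA : ∀ i j, A i j = -1 ∨ A i j = 1 := fun i j => sgn_eq _
  refine ⟨A, hA, fun w hw => ?_⟩
  have hsup : θ / m ≤ ⨆ u : {u : Fin n → ℝ // (∑ j, |u j|) = 1}, ⨅ i, A.mulVec u.1 i := by
    let u : Fin n → ℝ := fun j => if j ∈ univ.map g then 1 / (m : ℝ) else 0
    have hu : ∑ j, |u j| = 1 := by
      have : ∀ j, |u j| = if j ∈ univ.map g then 1 / (m : ℝ) else 0 := by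
        intro j
        simp only [u]
        split_ifs <;> simp
      simp_rw [this]
      rw [sum_ite_mem, univ_inter, sum_const, card_map, card_univ, Fintype.card_fin,
        nsmul_eq_mul, mul_one_div_cancel hm'.ne']
    refine le_trans ?_ (le_ciSup (f := fun u : {u : Fin n → ℝ // (∑ j, |u j|) = 1} =>
      ⨅ i, A.mulVec u.1 i) ⟨1, ?_⟩ ⟨u, hu⟩)
    · refine le_ciInf fun i => ?_
      have : A.mulVec u i = signSum (a i) / m := by
        simp only [Matrix.mulVec, dotProduct, u, mul_ite, mul_zero]
        rw [sum_ite_mem, univ_inter, sum_map, signSum, sum_div]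
        refine sum_congr rfl fun k _ => ?_
        simp only [A, hfg]
        ring
      rw [this]
      exact div_le_div_of_nonneg_right (ha i) hm'.le
    · rintro _ ⟨v, rfl⟩
      exact iInf_mulVec_le_one i₀ A hA v.1 v.2
  have hinf : ⨅ i, A.mulVec w i ≤ 0 := by
    obtain ⟨S, hsub, hS⟩ := exists_superset_card_eq
      (s := ({j | w j ≠ 0} : Finset (Fin n)).image f) (n := t) (card_image_le.trans hw)
      (by simpa using htm)
    by_contra hpos
    push Not at hpos
    refine hsep S hS ⟨fun k => ∑ j with f j = k, w j, fun k hk => ?_, fun i => ?_⟩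
    · refine sum_eq_zero fun j hj => ?_
      by_contra hne
      exact hk (hsub (mem_image.2 ⟨j, by simpa using hne, (mem_filter.1 hj).2⟩))
    · have e : ∑ k, sgn (a i k) * ∑ j with f j = k, w j = A.mulVec w i := by
        simp_rw [mul_sum]
        rw [Matrix.mulVec, dotProduct, ← sum_fiberwise univ f]
        refine sum_congr rfl fun k _ => sum_congr rfl fun j hj => ?_
        simp only [A, (mem_filter.1 hj).2]
      rw [e]
      exact hpos.trans_le (ciInf_le (Finite.bddBelow_range _) i)
  linarith

/-- Gap lower bound: for `ln n ≤ T ≤ n/C` there exists `A ∈ {-1,+1}^{n×n}` such that,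
with `ρ* = sup_{‖u‖₁=1} min_i (Au)_i`, every `T`-sparse unit-`ℓ₁` vector `w` has
`ρ* - min_i (Aw)_i ≥ c √(ln(n/T)/T)`. -/
theorem gap_lower_bound :
    ∃ C c : ℝ, 0 < C ∧ 0 < c ∧ ∃ n₀ : ℕ,
      ∀ n : ℕ, n₀ ≤ n → ∀ T : ℕ,
        Real.log n ≤ (T : ℝ) → (T : ℝ) ≤ (n : ℝ) / C →
          ∃ A : Matrix (Fin n) (Fin n) ℝ, (∀ i j, A i j = -1 ∨ A i j = 1) ∧
            ∀ w : Fin n → ℝ, (Finset.univ.filter (fun j => w j ≠ 0)).card ≤ T →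
              (∑ j, |w j|) = 1 →
              c * Real.sqrt (Real.log ((n : ℝ) / (T : ℝ)) / (T : ℝ)) ≤
                (⨆ u : {u : Fin n → ℝ // (∑ j, |u j|) = 1}, ⨅ i, A.mulVec u.1 i) -
                  (⨅ i, A.mulVec w i) := by
  refine ⟨Real.exp 128, 1 / 32, Real.exp_pos _, by norm_num, 2, fun n hn T hlog hTn => ?_⟩
  have hn2 : (2 : ℝ) ≤ n := by exact_mod_cast hn
  have hT0 : (0 : ℝ) < T := (Real.log_pos (by linarith)).trans_le hlog
  have hT1 : (1 : ℝ) ≤ T := by exact_mod_cast (Nat.cast_pos.1 hT0 : 0 < T)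
  set L := Real.log ((n : ℝ) / T) with hL
  have hx : (0 : ℝ) < n / T := by positivity
  have hexpL : Real.exp L = n / T := Real.exp_log hx
  have hL128 : 128 ≤ L := by
    rw [hL, Real.le_log_iff_exp_le hx, le_div_iff₀ hT0, mul_comm]
    exact (le_div_iff₀ (Real.exp_pos _)).1 hTn
  have hLT : L ≤ T := by
    refine (Real.log_le_log hx ?_).trans hlog
    exact div_le_self (by linarith) hT1
  set k := ⌊L / 4⌋₊ with hk
  have hkle : (k : ℝ) ≤ L / 4 := Nat.floor_le (by linarith)
  have hklt : L / 4 < k + 1 := Nat.lt_floor_add_one _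
  have hk32 : 32 ≤ k := Nat.le_floor (by push_cast; linarith)
  have hkT : k ≤ T := by
    have : (k : ℝ) ≤ T := by linarith
    exact_mod_cast this
  set b := T / k + 1 with hb
  have hkb : k * b = k * (T / k) + k := by rw [hb]; ring
  have hdiv := Nat.div_add_mod T k
  have hmod := Nat.mod_lt T (show 0 < k by omega)
  have hTkb : T ≤ k * b := by omega
  have hkb2 : k * b ≤ 2 * T := by omega
  have hb0 : 0 < b := Nat.succ_pos _
  have hkb2' : ((k * b : ℕ) : ℝ) ≤ 2 * T := by exact_mod_cast hkb2
  have hpow : 48 * (10 : ℝ) ^ k * T < n := by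
    rw [← lt_div_iff₀ hT0, ← hexpL]
    have e2 : (2 : ℝ) ≤ Real.exp 1 := by linarith [Real.add_one_le_exp (1 : ℝ)]
    have e10 : (10 : ℝ) ≤ Real.exp 3 := by
      have h27 := Real.exp_one_gt_d9.le
      have : Real.exp 3 = Real.exp 1 ^ 3 := by rw [← Real.exp_nat_mul]; norm_num
      rw [this]
      calc (10 : ℝ) ≤ (2.7182818283 : ℝ) ^ 3 := by norm_num
        _ ≤ _ := by gcongr
    have e48 : (48 : ℝ) < Real.exp (L / 4) := by
      calc (48 : ℝ) < 2 ^ 32 := by norm_num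
        _ ≤ Real.exp 1 ^ 32 := by gcongr
        _ = Real.exp 32 := by rw [← Real.exp_nat_mul]; norm_num
        _ ≤ Real.exp (L / 4) := Real.exp_le_exp.2 (by linarith)
    have e3 : (10 : ℝ) ^ k ≤ Real.exp (3 * L / 4) := by
      calc (10 : ℝ) ^ k ≤ Real.exp 3 ^ k := by gcongr
        _ = Real.exp (k * 3) := by rw [← Real.exp_nat_mul]
        _ ≤ _ := Real.exp_le_exp.2 (by linarith)
    calc 48 * (10 : ℝ) ^ k < Real.exp (L / 4) * 10 ^ k := by gcongr
      _ ≤ Real.exp (L / 4) * Real.exp (3 * L / 4) := by gcongr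
      _ = Real.exp L := by rw [← Real.exp_add]; congr 1; ring
  have h10 : (1 : ℝ) ≤ 10 ^ k := one_le_pow₀ (by norm_num)
  have hmn : 2 * (k * b) ≤ n := by
    have : ((2 * (k * b) : ℕ) : ℝ) ≤ n := by
      push_cast at hkb2' ⊢
      nlinarith
    exact_mod_cast this
  have hrows : 3 * ((k * b : ℕ) : ℝ) < (1 / 10 : ℝ) ^ k / 8 * n := by
    have : (1 / 10 : ℝ) ^ k / 8 * n = n / (8 * 10 ^ k) := by rw [one_div_pow]; field_simp
    rw [this, lt_div_iff₀ (by positivity)]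
    nlinarith
  obtain ⟨a, ha, hsep⟩ :=
    exists_not_separable (α := Fin (2 * (k * b))) n k b hk32 hb0 (by simp) hrows
  obtain ⟨A, hA, hgap⟩ := exists_matrix_gap (by omega) hmn (by omega) _ a ha hsep
  refine ⟨A, hA, fun w hw _ => le_trans ?_ (hgap w (hw.trans hTkb))⟩
  have hk0 : (0 : ℝ) < k := by exact_mod_cast (show 0 < k by omega)
  have hb0' : (0 : ℝ) < b := by exact_mod_cast hb0
  have hsqb : √(b : ℝ) * √b = b := Real.mul_self_sqrt hb0'.le
  have hsb : 0 < √(b : ℝ) := Real.sqrt_pos.2 hb0'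
  have hrhs : k * √(b : ℝ) / 4 / ((2 * (k * b) : ℕ) : ℝ) = 1 / (8 * √b) := by
    push_cast
    rw [← hsqb, Real.sqrt_mul_self hsb.le]
    field_simp
    norm_num
  have hbL : (b : ℝ) * L ≤ 16 * T := by
    push_cast at hkb2'
    nlinarith
  rw [hrhs, le_div_iff₀ (by positivity)]
  have hprod : √(L / T) * √b ≤ 4 := by
    rw [← Real.sqrt_mul (by positivity)]
    refine Real.sqrt_le_iff.2 ⟨by norm_num, ?_⟩
    rw [div_mul_eq_mul_div, div_le_iff₀ hT0]
    linarith
  linarith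
end

section
/- For every vector w ∈ ℝⁿ, every positive integer t, and every real a ≥ 1, it holds that F(w, a·t) ≤ a²·F(w, t). -/
open Finset
open scoped Classical

/-- `F(w,t)` computed with respect to a permutation `σ` ordering the coordinates of `w`
by decreasing absolute value:
`F(w,t) = Σ_{j=1}^{⌊t²⌋} |w_{i_j}| + t (Σ_{j=⌊t²⌋+1}^n w_{i_j}²)^{1/2}`. -/
noncomputable def Fval {n : ℕ} (w : Fin n → ℝ) (σ : Equiv.Perm (Fin n)) (t : ℝ) : ℝ :=
  (∑ j ∈ Finset.univ.filter (fun j : Fin n => (j : ℕ) < ⌊t ^ 2⌋₊), |w (σ j)|) +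
    t * Real.sqrt (∑ j ∈ Finset.univ.filter (fun j : Fin n => ⌊t ^ 2⌋₊ ≤ (j : ℕ)), (w (σ j)) ^ 2)

/-- Cauchy–Schwarz on the block of indices `T ≤ j < M`. -/
theorem sq_sum_abs_block_le {n : ℕ} (x : Fin n → ℝ) {T M : ℕ} (hTM : T ≤ M) :
    (∑ j ∈ univ.filter (fun j : Fin n => T ≤ (j : ℕ) ∧ (j : ℕ) < M), |x j|) ^ 2 ≤
      ((M : ℝ) - T) * ∑ j ∈ univ.filter (fun j : Fin n => T ≤ (j : ℕ) ∧ (j : ℕ) < M), x j ^ 2 := by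
  have hcard : #{j : Fin n | T ≤ (j : ℕ) ∧ (j : ℕ) < M} ≤ M - T := by
    rw [← Nat.card_Ico]
    refine Finset.card_le_card_of_injOn (fun j => (j : ℕ)) ?_ Fin.val_injective.injOn
    intro j hj
    simpa using hj
  have hcard' : (#{j : Fin n | T ≤ (j : ℕ) ∧ (j : ℕ) < M} : ℝ) ≤ (M : ℝ) - T := by
    rw [← Nat.cast_sub hTM]
    exact_mod_cast hcard
  have hcs := sq_sum_le_card_mul_sum_sq
    (s := ({j : Fin n | T ≤ (j : ℕ) ∧ (j : ℕ) < M} : Finset (Fin n))) (f := fun j => |x j|)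
  simp only [sq_abs] at hcs
  exact hcs.trans (mul_le_mul_of_nonneg_right hcard' (Finset.sum_nonneg fun j _ => sq_nonneg _))

/-- If `B² ≤ (a² - 1) t² P`, then `B + a t √R ≤ a² t √(P + R)`. -/
theorem add_mul_sqrt_le_sq_mul_sqrt_add {a t B P R : ℝ} (ha : 1 ≤ a) (ht : 0 ≤ t)
    (hP : 0 ≤ P) (hR : 0 ≤ R) (hB : B ^ 2 ≤ (a ^ 2 - 1) * t ^ 2 * P) :
    B + a * t * √R ≤ a ^ 2 * (t * √(P + R)) := by
  have hc : 0 ≤ a ^ 2 - 1 := by nlinarith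
  have hBle : B ≤ t * (√(a ^ 2 - 1) * √P) := by
    refine le_of_abs_le (abs_le_of_sq_le_sq ?_ (by positivity))
    rw [mul_pow, mul_pow, Real.sq_sqrt hc, Real.sq_sqrt hP]
    linarith
  have hkey : √(a ^ 2 - 1) * √P + a * √R ≤ a ^ 2 * √(P + R) := by
    refine le_of_abs_le (abs_le_of_sq_le_sq ?_ (by positivity))
    have h1 := Real.sq_sqrt hc
    have h2 := Real.sq_sqrt hP
    have h3 := Real.sq_sqrt hR
    rw [mul_pow, Real.sq_sqrt (add_nonneg hP hR)]
    calc (√(a ^ 2 - 1) * √P + a * √R) ^ 2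
        ≤ (√(a ^ 2 - 1) ^ 2 + a ^ 2) * (√P ^ 2 + √R ^ 2) := by
          nlinarith [sq_nonneg (√(a ^ 2 - 1) * √R - a * √P)]
      _ = (2 * a ^ 2 - 1) * (P + R) := by rw [h1, h2, h3]; ring
      _ ≤ (a ^ 2) ^ 2 * (P + R) :=
          mul_le_mul_of_nonneg_right (by nlinarith [sq_nonneg (a ^ 2 - 1)]) (add_nonneg hP hR)
  nlinarith [mul_le_mul_of_nonneg_left hkey ht]

/-- For every `w ∈ ℝⁿ`, positive integer `t` and real `a ≥ 1`, `F(w, a·t) ≤ a² F(w,t)`. -/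
theorem Fval_scale (n : ℕ) (w : Fin n → ℝ) (t : ℕ) (ht : 0 < t) (a : ℝ) (ha : 1 ≤ a)
    (σ : Equiv.Perm (Fin n)) (hσ : ∀ j k : Fin n, j ≤ k → |w (σ k)| ≤ |w (σ j)|) :
    Fval w σ (a * (t : ℝ)) ≤ a ^ 2 * Fval w σ (t : ℝ) := by
  have htT : ⌊(t : ℝ) ^ 2⌋₊ = t ^ 2 := by exact_mod_cast Nat.floor_natCast (R := ℝ) (t ^ 2)
  have ht0 : (0 : ℝ) ≤ t := t.cast_nonneg
  have hle : (t : ℝ) ^ 2 ≤ (a * t) ^ 2 := by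
    rw [mul_pow]
    exact le_mul_of_one_le_left (sq_nonneg _) (one_le_pow₀ ha)
  unfold Fval
  rw [htT]
  have hTM : t ^ 2 ≤ ⌊(a * t : ℝ) ^ 2⌋₊ := Nat.le_floor (by exact_mod_cast hle)
  have hM : (⌊(a * t : ℝ) ^ 2⌋₊ : ℝ) ≤ (a * t) ^ 2 := Nat.floor_le (sq_nonneg _)
  generalize ⌊(a * t : ℝ) ^ 2⌋₊ = M at hTM hM ⊢
  have hhead : ∑ j ∈ univ.filter (fun j : Fin n => (j : ℕ) < M), |w (σ j)| =
      ∑ j ∈ univ.filter (fun j : Fin n => (j : ℕ) < t ^ 2), |w (σ j)| +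
        ∑ j ∈ univ.filter (fun j : Fin n => t ^ 2 ≤ (j : ℕ) ∧ (j : ℕ) < M), |w (σ j)| := by
    rw [← Finset.sum_union (Finset.disjoint_left.2 fun j => by simp; omega)]
    congr 1
    ext j
    simp
    omega
  have htail : ∑ j ∈ univ.filter (fun j : Fin n => t ^ 2 ≤ (j : ℕ)), w (σ j) ^ 2 =
      ∑ j ∈ univ.filter (fun j : Fin n => t ^ 2 ≤ (j : ℕ) ∧ (j : ℕ) < M), w (σ j) ^ 2 +
        ∑ j ∈ univ.filter (fun j : Fin n => M ≤ (j : ℕ)), w (σ j) ^ 2 := by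
    rw [← Finset.sum_union (Finset.disjoint_left.2 fun j => by simp +contextual)]
    congr 1
    ext j
    simp
    omega
  have hP : 0 ≤ ∑ j ∈ univ.filter (fun j : Fin n => t ^ 2 ≤ (j : ℕ) ∧ (j : ℕ) < M), w (σ j) ^ 2 :=
    Finset.sum_nonneg fun j _ => sq_nonneg _
  have hR : 0 ≤ ∑ j ∈ univ.filter (fun j : Fin n => M ≤ (j : ℕ)), w (σ j) ^ 2 :=
    Finset.sum_nonneg fun j _ => sq_nonneg _
  have hH : 0 ≤ ∑ j ∈ univ.filter (fun j : Fin n => (j : ℕ) < t ^ 2), |w (σ j)| :=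
    Finset.sum_nonneg fun j _ => abs_nonneg _
  have hB := (sq_sum_abs_block_le (fun j => w (σ j)) hTM).trans
    (mul_le_mul_of_nonneg_right (c := (a ^ 2 - 1) * (t : ℝ) ^ 2)
      (by push_cast; linarith [mul_pow a (t : ℝ) 2]) hP)
  have hmain := add_mul_sqrt_le_sq_mul_sqrt_add ha ht0 hP hR hB
  rw [hhead, htail]
  nlinarith [mul_le_mul_of_nonneg_right (one_le_pow₀ ha : 1 ≤ a ^ 2) hH]
end

section
/- There exists a universal constant c₄ > 0 such that the following holds: for all positive integers k, n, every vector w ∈ ℝⁿ, and every integer t ≥ 4, if A is a random k×n matrix whose entries are independent and uniformly distributed on {−1,+1}, then the probability that ‖Aw‖₁ > c₄·k·F(w,t) is at most e^{−t²k/4}. -/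
open Finset
open scoped Classical

/-- A sum of a function over the two signs. -/
lemma sum_signs (f : ℝ → ℝ) : ∑ e : ({-1, 1} : Finset ℝ), f e = f (-1) + f 1 := by
  rw [Finset.sum_coe_sort ({-1, 1} : Finset ℝ) f, Finset.sum_pair (by norm_num)]

/-- The moment generating function of a Rademacher sum is subgaussian. -/
lemma sum_exp_rademacher_le {n : ℕ} (u : Fin n → ℝ) :
    ∑ a : Fin n → ({-1, 1} : Finset ℝ), Real.exp (∑ j, (a j : ℝ) * u j) ≤
      2 ^ n * Real.exp ((∑ j, u j ^ 2) / 2) := by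
  have key : ∑ a : Fin n → ({-1, 1} : Finset ℝ), Real.exp (∑ j, (a j : ℝ) * u j) =
      ∏ j, ∑ e : ({-1, 1} : Finset ℝ), Real.exp ((e : ℝ) * u j) := by
    rw [Fintype.prod_sum]
    exact Finset.sum_congr rfl fun a _ => Real.exp_sum _ _
  calc _ = ∏ j, (2 * Real.cosh (u j)) := by
        rw [key]
        refine Finset.prod_congr rfl fun j _ => ?_
        rw [sum_signs fun e => Real.exp (e * u j), Real.cosh_eq]
        ring_nf
    _ ≤ ∏ j, (2 * Real.exp (u j ^ 2 / 2)) :=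
        Finset.prod_le_prod (fun j _ => by positivity) fun j _ => by
          gcongr
          exact Real.cosh_le_exp_half_sq _
    _ = _ := by
        rw [Finset.prod_mul_distrib, ← Real.exp_sum, Finset.sum_div]
        simp

/-- The exponential moment of the absolute value of a Rademacher sum. -/
lemma sum_exp_abs_rademacher_le {n : ℕ} (u : Fin n → ℝ) (r : ℝ) :
    ∑ a : Fin n → ({-1, 1} : Finset ℝ), Real.exp (r * |∑ j, (a j : ℝ) * u j|) ≤
      2 ^ n * (2 * Real.exp (r ^ 2 * (∑ j, u j ^ 2) / 2)) := by
  have signed (q : ℝ) :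
      ∑ a : Fin n → ({-1, 1} : Finset ℝ), Real.exp (q * ∑ j, (a j : ℝ) * u j) ≤
        2 ^ n * Real.exp (q ^ 2 * (∑ j, u j ^ 2) / 2) := by
    simpa only [mul_pow, ← Finset.mul_sum, mul_left_comm] using
      sum_exp_rademacher_le fun j => q * u j
  calc _ ≤ ∑ a : Fin n → ({-1, 1} : Finset ℝ),
          (Real.exp (r * ∑ j, (a j : ℝ) * u j) + Real.exp (-r * ∑ j, (a j : ℝ) * u j)) := by
        refine Finset.sum_le_sum fun a _ => ?_
        rcases abs_choice (∑ j, (a j : ℝ) * u j) with h | h <;> rw [h]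
        · linarith [Real.exp_pos (-r * ∑ j, (a j : ℝ) * u j)]
        · rw [mul_neg, ← neg_mul]
          linarith [Real.exp_pos (r * ∑ j, (a j : ℝ) * u j)]
    _ ≤ _ := by
        rw [Finset.sum_add_distrib]
        have h₁ := signed r
        have h₂ := signed (-r)
        rw [neg_sq] at h₂
        linarith

/-- Chernoff's bound for the uniform measure on a finite type. -/
lemma card_filter_lt_mul_exp_le {α : Type*} [Fintype α] (f : α → ℝ) (c r : ℝ) (hr : 0 ≤ r) :
    ((Finset.univ.filter fun x => c < f x).card : ℝ) * Real.exp (r * c) ≤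
      ∑ x, Real.exp (r * f x) := by
  rw [← nsmul_eq_mul]
  calc _ ≤ ∑ x ∈ Finset.univ.filter (fun x => c < f x), Real.exp (r * f x) := by
        refine Finset.card_nsmul_le_sum _ _ _ fun x hx => ?_
        have := (Finset.mem_filter.mp hx).2
        gcongr
    _ ≤ _ := Finset.sum_le_univ_sum_of_nonneg fun x => (Real.exp_pos _).le

/-- Tail bound for the `ℓ₁` norm of a random sign matrix applied to `v`, measured against the
Euclidean norm of `v`. -/
lemma card_l1_gt_le {k n : ℕ} (v : Fin n → ℝ) (t : ℝ) (ht : 4 ≤ t) :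
    ((Finset.univ.filter (fun A : Fin k → Fin n → ({-1, 1} : Finset ℝ) =>
        k * (t * √(∑ j, v j ^ 2)) < ∑ h, |∑ j, (A h j : ℝ) * v j|)).card : ℝ) ≤
      (2 ^ n) ^ k * Real.exp (-(t ^ 2 * k) / 4) := by
  have hsq : √(∑ j, v j ^ 2) ^ 2 = ∑ j, v j ^ 2 := Real.sq_sqrt (by positivity)
  have hnonneg := Real.sqrt_nonneg (∑ j, v j ^ 2)
  generalize √(∑ j, v j ^ 2) = s at hsq hnonneg ⊢
  rcases hnonneg.eq_or_lt' with h0 | hpos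
  · have hv (j : Fin n) : v j = 0 := by
      rw [h0, zero_pow two_ne_zero, eq_comm,
        Finset.sum_eq_zero_iff_of_nonneg fun j _ => sq_nonneg _] at hsq
      simpa using hsq j (Finset.mem_univ j)
    simp only [h0, hv, mul_zero, Finset.sum_const_zero, abs_zero, lt_irrefl,
      Finset.filter_false, Finset.card_empty, Nat.cast_zero]
    positivity
  · have hr : 0 ≤ t / s := by positivity
    have hmoment : ∑ A : Fin k → Fin n → ({-1, 1} : Finset ℝ),
        Real.exp (t / s * ∑ h, |∑ j, (A h j : ℝ) * v j|) ≤
          (2 ^ n * (2 * Real.exp (t ^ 2 / 2))) ^ k := by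
      have hrow := sum_exp_abs_rademacher_le v (t / s)
      rw [← hsq, div_pow, div_mul_cancel₀ _ (by positivity)] at hrow
      calc _ = (∑ a : Fin n → ({-1, 1} : Finset ℝ),
            Real.exp (t / s * |∑ j, (a j : ℝ) * v j|)) ^ k := by
            rw [← Fin.prod_const, Fintype.prod_sum]
            refine Finset.sum_congr rfl fun A _ => ?_
            rw [Finset.mul_sum, Real.exp_sum]
        _ ≤ _ := by gcongr
    have hchern := (card_filter_lt_mul_exp_le
      (fun A : Fin k → Fin n → ({-1, 1} : Finset ℝ) => ∑ h, |∑ j, (A h j : ℝ) * v j|)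
      (k * (t * s)) (t / s) hr).trans hmoment
    have hexp : t / s * (k * (t * s)) = k * t ^ 2 := by field_simp
    have hbase : 2 * Real.exp (t ^ 2 / 2) ≤ Real.exp (3 * t ^ 2 / 4) := by
      have h2 : (2 : ℝ) ≤ Real.exp 1 := by linarith [Real.add_one_le_exp 1]
      calc _ ≤ Real.exp 1 * Real.exp (t ^ 2 / 2) := by gcongr
        _ = Real.exp (1 + t ^ 2 / 2) := (Real.exp_add _ _).symm
        _ ≤ _ := Real.exp_le_exp.mpr (by nlinarith)
    rw [hexp] at hchern
    refine le_of_mul_le_mul_right (hchern.trans ?_) (Real.exp_pos (k * t ^ 2))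
    calc _ ≤ (2 ^ n * Real.exp (3 * t ^ 2 / 4)) ^ k := by gcongr
      _ = _ := by
        rw [mul_pow, ← Real.exp_nat_mul, mul_assoc, ← Real.exp_add]
        ring_nf

/-- A Rademacher sum is at most the `ℓ₁` norm of the head plus the Rademacher sum of the tail. -/
lemma abs_rademacher_le_head_add_tail {n : ℕ} (w : Fin n → ℝ) (a : Fin n → ({-1, 1} : Finset ℝ))
    (p : Fin n → Prop) [DecidablePred p] :
    |∑ j, (a j : ℝ) * w j| ≤
      ∑ j, (if p j then 0 else |w j|) + |∑ j, (a j : ℝ) * if p j then w j else 0| := by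
  have hsplit : ∑ j, (a j : ℝ) * w j =
      ∑ j, (a j : ℝ) * (if p j then 0 else w j) + ∑ j, (a j : ℝ) * if p j then w j else 0 := by
    rw [← Finset.sum_add_distrib]
    refine Finset.sum_congr rfl fun j _ => ?_
    split_ifs <;> ring
  rw [hsplit]
  refine (abs_add_le _ _).trans (add_le_add_left ?_ _)
  refine (Finset.abs_sum_le_sum_abs _ _).trans (Finset.sum_le_sum fun j _ => ?_)
  have hsign : |(a j : ℝ)| = 1 := by
    rcases Finset.mem_insert.mp (a j).2 with h | h
    · simp [h]
    · simp [Finset.mem_singleton.mp h]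
  rw [abs_mul, hsign, one_mul]
  split_ifs <;> simp

/-- `Fval` as a sum over the original coordinates. -/
lemma Fval_eq {n : ℕ} (w : Fin n → ℝ) (σ : Equiv.Perm (Fin n)) (t : ℝ) :
    Fval w σ t = ∑ j, (if ⌊t ^ 2⌋₊ ≤ (σ.symm j : ℕ) then 0 else |w j|) +
      t * √(∑ j, (if ⌊t ^ 2⌋₊ ≤ (σ.symm j : ℕ) then w j else 0) ^ 2) := by
  rw [← Equiv.sum_comp σ, ← Equiv.sum_comp σ (fun j => (ite _ (w j) 0) ^ 2)]
  simp only [Fval, Equiv.symm_apply_apply, ite_pow, ne_eq, OfNat.ofNat_ne_zero,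
    not_false_eq_true, zero_pow, Finset.sum_filter, ← not_lt, ite_not]

/-- For a random `k×n` matrix `A` with independent uniform `{-1,+1}` entries and any
integer `t ≥ 4`, `Pr[‖Aw‖₁ > c₄ k F(w,t)] ≤ e^{-t²k/4}`. -/
theorem l1_tail_bound :
    ∃ c₄ : ℝ, 0 < c₄ ∧
      ∀ (k n : ℕ), 0 < k → 0 < n →
        ∀ (w : Fin n → ℝ) (t : ℕ), 4 ≤ t →
          ∀ σ : Equiv.Perm (Fin n), (∀ j l : Fin n, j ≤ l → |w (σ l)| ≤ |w (σ j)|) →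
            ((Finset.univ.filter (fun A : Fin k → Fin n → ({-1, 1} : Finset ℝ) =>
                c₄ * (k : ℝ) * Fval w σ (t : ℝ) < ∑ h, |∑ j, (A h j : ℝ) * w j|)).card : ℝ) /
              ((Finset.univ : Finset (Fin k → Fin n → ({-1, 1} : Finset ℝ))).card : ℝ) ≤
            Real.exp (-((t : ℝ) ^ 2 * (k : ℝ)) / 4) := by
  refine ⟨1, one_pos, fun k n _ _ w t ht σ _ => ?_⟩
  have hcard : ((Finset.univ : Finset (Fin k → Fin n → ({-1, 1} : Finset ℝ))).card : ℝ) =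
      (2 ^ n) ^ k := by
    have h2 : ({-1, 1} : Finset ℝ).card = 2 := Finset.card_pair (by norm_num)
    simp [h2]
  rw [hcard, div_le_iff₀' (by positivity)]
  refine le_trans ?_ (card_l1_gt_le (k := k)
    (fun j => if ⌊(t : ℝ) ^ 2⌋₊ ≤ (σ.symm j : ℕ) then w j else 0) t (by exact_mod_cast ht))
  refine Nat.cast_le.mpr (Finset.card_le_card ?_)
  refine Finset.monotone_filter_right _ fun A _ hA => ?_
  have hrows := Finset.sum_le_sum fun h (_ : h ∈ Finset.univ) =>
    abs_rademacher_le_head_add_tail w (A h) fun j => ⌊(t : ℝ) ^ 2⌋₊ ≤ (σ.symm j : ℕ)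
  rw [Finset.sum_add_distrib, Finset.sum_const, Finset.card_univ, Fintype.card_fin,
    nsmul_eq_mul] at hrows
  rw [Fval_eq, one_mul, mul_add] at hA
  linarith
end

section
/- For every constant c₃ > 0 there exist constants b₁ > 1, c > 0 and an integer n₀ such that for all n ≥ n₀ and all integers T with 1 ≤ T ≤ n/b₁, it holds that ⌊√( c₃^{−1} · ln( n / (12·c₃·ln binom(n,T)) ) )⌋ ≥ c·√(ln(n/T)). -/
open Finset
open scoped Classical

theorem log_choose_le {n T : ℕ} (hT : 1 ≤ T) (hTn : T ≤ n) :
    Real.log (n.choose T) ≤ T * (1 + Real.log ((n : ℝ) / T)) := by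
  have hT0 : (0 : ℝ) < T := by exact_mod_cast hT
  have hn0 : (0 : ℝ) < n := by exact_mod_cast (lt_of_lt_of_le hT hTn)
  have hfact : (0 : ℝ) < T.factorial := by exact_mod_cast T.factorial_pos
  have hchoose : (0 : ℝ) < n.choose T := by exact_mod_cast Nat.choose_pos hTn
  have hle : (n.choose T : ℝ) ≤ (n : ℝ) ^ T / T.factorial := Nat.choose_le_pow_div T n
  have hexp : (T : ℝ) ^ T / T.factorial ≤ Real.exp T :=
    Real.pow_div_factorial_le_exp (T : ℝ) hT0.le T
  have hbound : (n.choose T : ℝ) ≤ ((n : ℝ) / T) ^ T * Real.exp T := by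
    calc (n.choose T : ℝ) ≤ (n : ℝ) ^ T / T.factorial := hle
      _ = ((n : ℝ) / T) ^ T * ((T : ℝ) ^ T / T.factorial) := by
        rw [div_pow]; field_simp
      _ ≤ ((n : ℝ) / T) ^ T * Real.exp T := by gcongr
  calc Real.log (n.choose T) ≤ Real.log (((n : ℝ) / T) ^ T * Real.exp T) :=
        Real.log_le_log hchoose hbound
    _ = T * (1 + Real.log ((n : ℝ) / T)) := by
        rw [Real.log_mul (by positivity) (by positivity), Real.log_pow, Real.log_exp]; ring

theorem log_choose_pos {n T : ℕ} (hT : 1 ≤ T) (hTn : T < n) :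
    0 < Real.log (n.choose T) := by
  apply Real.log_pos
  have h1 : n.choose T ≠ 1 := by
    rw [Ne, Nat.choose_eq_one_iff]
    omega
  have h2 : 0 < n.choose T := Nat.choose_pos hTn.le
  exact_mod_cast (by omega : 1 < n.choose T)

/-- Logarithmic factors cost at most three quarters of the exponent once `x ≥ exp (96 a)`. -/
theorem exp_log_div_four_le {a x : ℝ} (ha : 0 < a) (hx : Real.exp (96 * a) ≤ x) :
    Real.exp (Real.log x / 4) ≤ x / (12 * a * (1 + Real.log x)) := by
  have hx0 : 0 < x := (Real.exp_pos _).trans_le hx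
  have hl : 96 * a ≤ Real.log x := (Real.le_log_iff_exp_le hx0).2 hx
  set l := Real.log x with hldef
  set s := Real.exp (l / 4) with hs
  have hs0 : 0 < s := Real.exp_pos _
  have hxs : x = s ^ 4 := by
    rw [hs, ← Real.exp_nat_mul, ← Real.exp_log hx0, ← hldef]
    congr 1; push_cast; ring
  have hs2 : s ^ 2 = Real.exp (l / 2) := by
    rw [hs, ← Real.exp_nat_mul]
    congr 1; push_cast; ring
  have h1 : 24 * a ≤ s := by
    have := Real.add_one_le_exp (l / 4)
    linarith
  have h2 : 1 + l ≤ 2 * s ^ 2 := by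
    have := Real.add_one_le_exp (l / 2)
    linarith
  have hl0 : 0 < 1 + l := by linarith
  rw [le_div_iff₀ (by positivity)]
  calc s * (12 * a * (1 + l)) ≤ s * (12 * a * (2 * s ^ 2)) := by gcongr
    _ = 24 * a * s ^ 3 := by ring
    _ ≤ s * s ^ 3 := by gcongr
    _ = x := by rw [hxs]; ring

theorem half_le_natFloor {y : ℝ} (hy : 1 ≤ y) : y / 2 ≤ (⌊y⌋₊ : ℝ) := by
  have h1 : (1 : ℝ) ≤ ⌊y⌋₊ := by exact_mod_cast (Nat.one_le_floor_iff y).2 hy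
  linarith [Nat.lt_floor_add_one y]

/-- The truncation parameter `τ(T) = ⌊√(c₃⁻¹ ln(n/(12 c₃ ln binom(n,T))))⌋` is of order
at least `√(ln(n/T))` whenever `T ≤ n/b₁` for `b₁` large enough. -/
theorem tau_lower_bound :
    ∀ c₃ : ℝ, 0 < c₃ →
      ∃ b₁ c : ℝ, 1 < b₁ ∧ 0 < c ∧ ∃ n₀ : ℕ,
        ∀ n : ℕ, n₀ ≤ n → ∀ T : ℕ, 1 ≤ T → (T : ℝ) ≤ (n : ℝ) / b₁ →
          c * Real.sqrt (Real.log ((n : ℝ) / (T : ℝ))) ≤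
            (⌊Real.sqrt (c₃⁻¹ *
              Real.log ((n : ℝ) / (12 * c₃ * Real.log (n.choose T))))⌋₊ : ℝ) := by
  intro a ha
  have hb : 1 < Real.exp (96 * a) := Real.one_lt_exp_iff.2 (by positivity)
  refine ⟨Real.exp (96 * a), √(a⁻¹ / 4) / 2, hb, by positivity, 0, ?_⟩
  intro n _ T hT hTn
  have hT0 : (0 : ℝ) < T := by exact_mod_cast hT
  have hTb : T * Real.exp (96 * a) ≤ n := (le_div_iff₀ (by positivity)).1 hTn
  have hlt : T < n := by
    have : (T : ℝ) < n := (lt_mul_of_one_lt_right hT0 hb).trans_le hTb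
    exact_mod_cast this
  have hx : Real.exp (96 * a) ≤ (n : ℝ) / T := by
    rw [le_div_iff₀ hT0]; linarith
  have hl : 96 * a ≤ Real.log ((n : ℝ) / T) :=
    (Real.le_log_iff_exp_le ((Real.exp_pos _).trans_le hx)).2 hx
  have hL := log_choose_pos hT hlt
  have hratio : Real.exp (Real.log ((n : ℝ) / T) / 4) ≤
      (n : ℝ) / (12 * a * Real.log (n.choose T)) := by
    calc _ ≤ ((n : ℝ) / T) / (12 * a * (1 + Real.log ((n : ℝ) / T))) :=
          exp_log_div_four_le ha hx
      _ = (n : ℝ) / (12 * a * (T * (1 + Real.log ((n : ℝ) / T)))) := by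
          rw [div_div]; congr 1; ring
      _ ≤ _ := by
          gcongr
          exact log_choose_le hT hlt.le
  have hlog : Real.log ((n : ℝ) / T) / 4 ≤
      Real.log ((n : ℝ) / (12 * a * Real.log (n.choose T))) :=
    (Real.le_log_iff_exp_le ((Real.exp_pos _).trans_le hratio)).2 hratio
  have hsqrt : √(a⁻¹ / 4) * √(Real.log ((n : ℝ) / T)) ≤
      √(a⁻¹ * Real.log ((n : ℝ) / (12 * a * Real.log (n.choose T)))) := by
    rw [← Real.sqrt_mul (by positivity)]
    apply Real.sqrt_le_sqrt
    calc _ = a⁻¹ * (Real.log ((n : ℝ) / T) / 4) := by ring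
      _ ≤ _ := by gcongr
  have hone : 1 ≤ √(a⁻¹ * Real.log ((n : ℝ) / (12 * a * Real.log (n.choose T)))) := by
    rw [Real.one_le_sqrt]
    calc 1 = a⁻¹ * a := (inv_mul_cancel₀ ha.ne').symm
      _ ≤ _ := by gcongr; linarith
  linarith [half_le_natFloor hone]
end

section
/- Let T be a positive integer and let w ∈ ℝⁿ satisfy ‖w‖₁ ≥ 1 and ‖w‖₀ ≤ T. Then for every real t > 0: F(w,t) ≥ min{ 1/2 , t/(2·√T) }. -/
open Finset
open scoped Classical

/-- Cauchy-Schwarz restricted to the support: the square of the `ℓ¹` sum over `s` is at most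
the number of nonzero terms, bounded by `T`, times the sum of squares over `s`. -/
theorem sq_sum_abs_le_of_card_support_le {ι : Type*} (s : Finset ι) (f : ι → ℝ) (T : ℕ)
    (hT : (s.filter (fun i => f i ≠ 0)).card ≤ T) :
    (∑ i ∈ s, |f i|) ^ 2 ≤ T * ∑ i ∈ s, f i ^ 2 := by
  have hsum : ∑ i ∈ s.filter (fun i => f i ≠ 0), |f i| = ∑ i ∈ s, |f i| :=
    Finset.sum_filter_of_ne fun i _ hi => abs_ne_zero.mp hi
  calc (∑ i ∈ s, |f i|) ^ 2
      ≤ (s.filter (fun i => f i ≠ 0)).card * ∑ i ∈ s.filter (fun i => f i ≠ 0), |f i| ^ 2 :=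
        hsum ▸ sq_sum_le_card_mul_sum_sq
    _ ≤ T * ∑ i ∈ s, f i ^ 2 := by
        simp only [sq_abs]
        gcongr
        exact Finset.filter_subset _ _

/-- If `‖w‖₁ ≥ 1` and `‖w‖₀ ≤ T`, then `F(w,t) ≥ min(1/2, t/(2√T))`. -/
theorem Fval_lower_bound (n T : ℕ) (hT : 0 < T) (w : Fin n → ℝ)
    (hw1 : 1 ≤ ∑ i, |w i|) (hw0 : (Finset.univ.filter (fun i => w i ≠ 0)).card ≤ T)
    (t : ℝ) (ht : 0 < t)
    (σ : Equiv.Perm (Fin n)) (hσ : ∀ j k : Fin n, j ≤ k → |w (σ k)| ≤ |w (σ j)|) :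
    min (1 / 2) (t / (2 * Real.sqrt (T : ℝ))) ≤ Fval w σ t := by
  have hsplit : ∑ i, |w i| =
      (∑ j ∈ Finset.univ.filter (fun j : Fin n => (j : ℕ) < ⌊t ^ 2⌋₊), |w (σ j)|) +
        ∑ j ∈ Finset.univ.filter (fun j : Fin n => ⌊t ^ 2⌋₊ ≤ (j : ℕ)), |w (σ j)| := by
    rw [← Equiv.sum_comp σ, ← Finset.sum_filter_add_sum_filter_not _
      (fun j : Fin n => (j : ℕ) < ⌊t ^ 2⌋₊)]
    simp only [not_lt]
  have hcard : ((Finset.univ.filter (fun j : Fin n => ⌊t ^ 2⌋₊ ≤ (j : ℕ))).filter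
      (fun j => w (σ j) ≠ 0)).card ≤ T := by
    refine le_trans (Finset.card_le_card_of_injOn σ ?_ σ.injective.injOn) hw0
    intro j hj
    simpa using (Finset.mem_filter.mp hj).2
  have hcs := sq_sum_abs_le_of_card_support_le _ (fun j => w (σ j)) T hcard
  have hhead : 0 ≤ ∑ j ∈ Finset.univ.filter (fun j : Fin n => (j : ℕ) < ⌊t ^ 2⌋₊), |w (σ j)| :=
    Finset.sum_nonneg fun _ _ => abs_nonneg _
  unfold Fval
  rcases le_total (1 / 2)
    (∑ j ∈ Finset.univ.filter (fun j : Fin n => (j : ℕ) < ⌊t ^ 2⌋₊), |w (σ j)|) with h | h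
  · exact (min_le_left _ _).trans (le_add_of_le_of_nonneg h (by positivity))
  · refine (min_le_right _ _).trans (le_add_of_nonneg_of_le hhead ?_)
    have hTpos : 0 < Real.sqrt (T : ℝ) := Real.sqrt_pos.mpr (by exact_mod_cast hT)
    have htail := Real.le_sqrt_of_sq_le hcs
    rw [Real.sqrt_mul (Nat.cast_nonneg T)] at htail
    rw [div_eq_mul_inv]
    refine mul_le_mul_of_nonneg_left ?_ ht.le
    rw [inv_le_iff_one_le_mul₀ (by positivity)]
    linarith
end

section
/- Let n, T, b be positive integers with T ≤ n. The set W of all vectors w ∈ ℝⁿ such that w has at most T nonzero coordinates, every coordinate of w is an integer multiple of 1/(bT), and the sum over all coordinates of |w_i|·bT is at most (b+1)·T, is finite and has cardinality at most binom(n,T) · 2^T · Σ_{i=0}^{(b+1)T} binom(T+i−1, T). -/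
open Finset
open scoped Classical

/-- The net: vectors `w ∈ ℝⁿ` with at most `T` nonzero coordinates, every coordinate an
integer multiple of `1/(bT)`, and `Σ_i |w_i|·bT ≤ (b+1)T`. -/
def netSet (n T b : ℕ) : Set (Fin n → ℝ) :=
  {w | (Finset.univ.filter (fun i => w i ≠ 0)).card ≤ T ∧
       (∀ i, ∃ z : ℤ, w i = (z : ℝ) / ((b : ℝ) * (T : ℝ))) ∧
       (∑ i, |w i| * ((b : ℝ) * (T : ℝ))) ≤ ((b : ℝ) + 1) * (T : ℝ)}

theorem sum_choose_le_sum_choose {T M : ℕ} (hT : 0 < T) (hM : T + 1 ≤ M) :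
    ∑ m ∈ range (M + 1), (T + m - 1).choose m ≤ ∑ i ∈ range (M + 1), (T + i - 1).choose T := by
  obtain ⟨k, rfl⟩ : ∃ k, T = k + 1 := ⟨T - 1, by omega⟩
  obtain ⟨N, rfl⟩ : ∃ N, M = N + 1 := ⟨M - 1, by omega⟩
  have hl : ∑ m ∈ range (N + 1 + 1), (k + 1 + m - 1).choose m = (N + k + 2).choose (k + 1) := by
    rw [show N + k + 2 = N + 1 + k + 1 by ring, ← Nat.sum_range_add_choose]
    refine sum_congr rfl fun m _ => ?_
    rw [show k + 1 + m - 1 = m + k by omega, Nat.choose_symm_add]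
  have hr : ∑ i ∈ range (N + 1 + 1), (k + 1 + i - 1).choose (k + 1) =
      (N + k + 2).choose (k + 2) := by
    rw [sum_range_succ', show N + k + 2 = N + (k + 1) + 1 by ring, ← Nat.sum_range_add_choose]
    simp only [Nat.add_zero, Nat.add_sub_cancel, Nat.choose_succ_self]
    refine sum_congr rfl fun m _ => ?_
    rw [show k + 1 + (m + 1) - 1 = m + (k + 1) by omega]
  rw [hl, hr]
  have h := Nat.choose_succ_right_eq (N + k + 2) (k + 1)
  rw [show N + k + 2 - (k + 1) = N + 1 by omega] at h
  refine Nat.le_of_mul_le_mul_right (c := k + 2) ?_ (by omega)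
  calc (N + k + 2).choose (k + 1) * (k + 2)
      ≤ (N + k + 2).choose (k + 1) * (N + 1) := Nat.mul_le_mul_left _ (by omega)
    _ = _ := h.symm

/-- The vector with magnitudes `f / c`, negated on `P`. -/
noncomputable def signedVector {n : ℕ} (c : ℝ) (P : Finset (Fin n)) (f : Fin n →₀ ℕ) : Fin n → ℝ :=
  fun i => (if i ∈ P then -1 else 1) * (f i : ℝ) / c

/-- All signed vectors with denominators `c`, supported on a `T`-set, with magnitudes of total at
most `M`. -/
noncomputable def signedVectors (n T M : ℕ) (c : ℝ) : Finset (Fin n → ℝ) :=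
  (powersetCard T univ).biUnion fun S =>
    (S.powerset ×ˢ (range (M + 1)).biUnion fun m => finsuppAntidiag S m).image
      fun p => signedVector c p.1 p.2

theorem card_signedVectors_le (n T M : ℕ) (c : ℝ) :
    (signedVectors n T M c).card ≤
      n.choose T * 2 ^ T * ∑ m ∈ range (M + 1), (T + m - 1).choose m := by
  have hcard : (powersetCard T (univ : Finset (Fin n))).card = n.choose T := by simp
  rw [mul_assoc, ← hcard]
  refine card_biUnion_le_card_mul _ _ _ fun S hS => card_image_le.trans ?_
  have hS : S.card = T := (mem_powersetCard.1 hS).2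
  rw [card_product, card_powerset, hS]
  refine Nat.mul_le_mul_left _ (card_biUnion_le.trans_eq ?_)
  simp [hS, card_finsuppAntidiag_nat_eq_choose]

theorem netSet_subset_signedVectors {n T b : ℕ} (hT : 0 < T) (hb : 0 < b) (hTn : T ≤ n) :
    netSet n T b ⊆ signedVectors n T ((b + 1) * T) ((b : ℝ) * T) := by
  rintro w ⟨hcard, hint, hsum⟩
  have hc : (0 : ℝ) < b * T := by positivity
  choose z hz using hint
  obtain ⟨S, hwS, -, hS⟩ := exists_subsuperset_card_eq
    (subset_univ (univ.filter fun i => w i ≠ 0)) hcard (by simpa using hTn)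
  have hzS : ∀ i, z i ≠ 0 → i ∈ S := fun i hi => hwS <| by
    simpa [hz i, hT.ne', hb.ne'] using hi
  have habs : ∀ i, |w i| * ((b : ℝ) * T) = ((z i).natAbs : ℝ) := fun i => by
    rw [hz i, abs_div, abs_of_pos hc, div_mul_cancel₀ _ hc.ne', Nat.cast_natAbs, Int.cast_abs]
  have hle : ∑ i ∈ S, (z i).natAbs ≤ (b + 1) * T := by
    refine (sum_le_univ_sum_of_nonneg fun i => Nat.zero_le _).trans ?_
    simp only [habs] at hsum
    exact_mod_cast hsum
  simp only [signedVectors, coe_biUnion, Set.mem_iUnion, mem_coe, mem_image, mem_product,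
    mem_biUnion, mem_powerset, mem_finsuppAntidiag, mem_range, mem_powersetCard]
  refine ⟨S, ⟨subset_univ _, hS⟩, ⟨S.filter fun i => z i < 0, Finsupp.equivFunOnFinite.symm fun i => (z i).natAbs⟩,
    ⟨filter_subset _ _, _, Nat.lt_succ_of_le hle, rfl,
      fun i hi => hzS i (by simpa using hi)⟩, ?_⟩
  funext i
  simp only [signedVector, mem_filter, hz i, Finsupp.equivFunOnFinite_symm_apply_apply]
  congr 1
  rw [Nat.cast_natAbs]
  by_cases h : z i < 0
  · simp [h, hzS i h.ne, abs_of_neg h]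
  · simp [h, abs_of_nonneg (not_lt.1 h)]

/-- The net is finite, of cardinality at most
`binom(n,T) · 2^T · Σ_{i=0}^{(b+1)T} binom(T+i-1, T)`. -/
theorem netSet_card (n T b : ℕ) (hn : 0 < n) (hT : 0 < T) (hb : 0 < b) (hTn : T ≤ n) :
    (netSet n T b).Finite ∧
      (netSet n T b).ncard ≤
        n.choose T * 2 ^ T * ∑ i ∈ Finset.range ((b + 1) * T + 1), (T + i - 1).choose T := by
  have hsub := netSet_subset_signedVectors hT hb hTn
  refine ⟨(finite_toSet _).subset hsub, (Set.ncard_le_ncard hsub (finite_toSet _)).trans ?_⟩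
  rw [Set.ncard_coe_finset]
  exact (card_signedVectors_le ..).trans
    (Nat.mul_le_mul_left _ (sum_choose_le_sum_choose hT (by nlinarith)))
end

section
/- For every constant c₁ > 0 there exists a constant c₂ > 0 such that for all positive integers n, T with T ≤ n and every real v with v > 1/√n: if v ≥ c₁·√(log₂(n/T)/T), then T ≥ c₂·log₂(n·v²)/v². -/
open Finset

/-- Rewriting bounds: if `v ≥ c₁ √(log₂(n/T)/T)` and `v > 1/√n`, then
`T ≥ c₂ log₂(n v²)/v²`. -/
theorem rewrite_v_to_T :
    ∀ c₁ : ℝ, 0 < c₁ →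
      ∃ c₂ : ℝ, 0 < c₂ ∧
        ∀ n T : ℕ, 0 < n → 0 < T → T ≤ n →
          ∀ v : ℝ, 1 / Real.sqrt (n : ℝ) < v →
            c₁ * Real.sqrt (Real.logb 2 ((n : ℝ) / (T : ℝ)) / (T : ℝ)) ≤ v →
            c₂ * Real.logb 2 ((n : ℝ) * v ^ 2) / v ^ 2 ≤ (T : ℝ) := by
  intro c₁ hc₁
  have hlog2 : 0 < Real.log 2 := Real.log_pos one_lt_two
  refine ⟨(1 / c₁ ^ 2 + 1 / Real.log 2)⁻¹, by positivity, ?_⟩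
  intro n T hn hT hTn v hnv hv
  have hn' : (0 : ℝ) < n := by exact_mod_cast hn
  have hT' : (0 : ℝ) < T := by exact_mod_cast hT
  have hv0 : 0 < v := lt_trans (by positivity) hnv
  have hx : 0 < (T : ℝ) * v ^ 2 := by positivity
  have hratio : Real.logb 2 ((n : ℝ) / T) ≤ T * v ^ 2 / c₁ ^ 2 := by
    have hsqrt : Real.sqrt (Real.logb 2 ((n : ℝ) / T) / T) ≤ v / c₁ := by
      rwa [le_div_iff₀ hc₁, mul_comm]
    have hsq := (Real.sqrt_le_left (by positivity)).mp hsqrt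
    rw [div_le_iff₀ hT', div_pow] at hsq
    exact hsq.trans_eq (by ring)
  have hself : Real.logb 2 ((T : ℝ) * v ^ 2) ≤ T * v ^ 2 / Real.log 2 :=
    div_le_div_of_nonneg_right (Real.log_le_self hx.le) hlog2.le
  have hsplit : Real.logb 2 ((n : ℝ) * v ^ 2)
      = Real.logb 2 ((n : ℝ) / T) + Real.logb 2 ((T : ℝ) * v ^ 2) := by
    rw [← Real.logb_mul (by positivity) hx.ne']
    congr 1
    field_simp
  rw [div_le_iff₀ (by positivity), inv_mul_le_iff₀ (by positivity), hsplit]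
  exact (add_le_add hratio hself).trans_eq (by ring)
end
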